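/- arXiv:math/0002047 — 3 statements merged into one kernel-verified Lean document; each statement's English description precedes it below -/
import Mathlib

section
/- Let P ∈ ℤ[x] be a nonzero polynomial with deg P ≤ d and L(P) ≤ L, where L ≥ 3. Then |P(e)| ≥ exp{ −1.3·10⁵ · d² · (log L + d) }. -/
open Polynomial

/-- The length of an integer polynomial: the sum of the absolute values of its
coefficients. -/
noncomputable def polyLength (P : Polynomial ℤ) : ℝ :=
  ∑ i ∈ Finset.range (P.natDegree + 1), (|P.coeff i| : ℝ)

/-!
The argument is Gelfond's. Let `P` be irreducible of degree `d`. By the box principle some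
`F(z) = ∑ p (i, j, k) e ^ k z ^ i exp(j z)`, with `k < d` and integers `p (i, j, k)` that are small
and not all zero, has tiny initial Taylor coefficients at the origin, hence is tiny on a large disc.
By Cauchy's inequalities the derivatives `F⁽ᵗ⁾(s)` at natural numbers `s` are tiny, and each of them
is `Q(e)` for some `Q ∈ ℤ[x]` of controlled degree and length. If `α` is a root of `P`, then `Q(α)`
is obtained from the same exponential polynomial with `e` replaced by `α` throughout; the powers
`α ^ k`, `k < d`, being linearly independent, a zero estimate (via Wronskians) provides `s` and `t`
with `Q(α) ≠ 0`. The resultant of `P` and `Q` is then a nonzero integer and a combination of `P(e)`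
and `Q(e)` with bounded coefficients; since `Q(e)` is tiny, `P(e)` cannot be. For arbitrary `P` one
factors: the degree and the logarithmic Mahler measure are additive, whereas the length is not.
-/

open Finset Matrix

/-! ### Determinants and resultants -/

section Determinant

variable {R n : Type*} [NormedCommRing R] [Fintype n] [DecidableEq n]

theorem norm_units_smul_eq (u : ℤˣ) (x : R) : ‖u • x‖ = ‖x‖ := by
  rcases Int.units_eq_one_or u with rfl | rfl <;> simp

theorem norm_det_le_prod_sum_norm [NormOneClass R] (A : Matrix n n R) :
    ‖A.det‖ ≤ ∏ j, ∑ i, ‖A i j‖ :=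
  calc ‖A.det‖ ≤ ∑ σ : Equiv.Perm n, ∏ j, ‖A (σ j) j‖ := by
        rw [det_apply]
        refine (norm_sum_le _ _).trans (sum_le_sum fun σ _ ↦ ?_)
        rw [norm_units_smul_eq]
        exact Finset.norm_prod_le _ _
    _ ≤ ∑ f : n → n, ∏ j, ‖A (f j) j‖ := by
        rw [← sum_image (g := fun σ : Equiv.Perm n ↦ (σ : n → n))
          (f := fun f ↦ ∏ j, ‖A (f j) j‖) DFunLike.coe_injective.injOn]
        exact sum_le_sum_of_subset_of_nonneg (subset_univ _)
          fun f _ _ ↦ prod_nonneg fun j _ ↦ norm_nonneg _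
    _ = ∏ j, ∑ i, ‖A i j‖ := by simp [prod_univ_sum]

theorem norm_adjugate_le [NormOneClass R] (A : Matrix n n R) (j k : n) :
    ‖A.adjugate j k‖ ≤ ∏ c ∈ univ.erase j, ∑ i, ‖A i c‖ := by
  have cramer : A.adjugate j k = (A.updateCol j (Pi.single k 1)).det := by
    rw [← cramer_apply, cramer_eq_adjugate_mulVec, mulVec_single_one, col_apply]
  have column : ∑ i, ‖A.updateCol j (Pi.single k 1) i j‖ = 1 := by
    simp [Pi.single_apply, apply_ite norm]
  rw [cramer]
  refine (norm_det_le_prod_sum_norm _).trans_eq ?_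
  rw [← mul_prod_erase univ _ (mem_univ j), column, one_mul]
  refine prod_congr rfl fun c hc ↦ ?_
  simp [updateCol_ne (ne_of_mem_erase hc)]

theorem det_eq_sum_vecMul_mul_adjugate {R : Type*} [CommRing R] (A : Matrix n n R) {v : n → R}
    {k : n} (hv : v k = 1) : A.det = ∑ j, (v ᵥ* A) j * A.adjugate j k := by
  have key : (v ᵥ* A ᵥ* A.adjugate) k = A.det := by
    simp [vecMul_vecMul, mul_adjugate, vecMul_smul, hv]
  exact key.symm

theorem norm_det_le_sum_norm_vecMul [NormOneClass R] (A : Matrix n n R) {v : n → R} {k : n}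
    (hv : v k = 1) :
    ‖A.det‖ ≤ ∑ j, ‖(v ᵥ* A) j‖ * ∏ c ∈ univ.erase j, ∑ i, ‖A i c‖ := by
  rw [det_eq_sum_vecMul_mul_adjugate A hv]
  refine (norm_sum_le _ _).trans (sum_le_sum fun j _ ↦ (norm_mul_le _ _).trans ?_)
  gcongr
  exact norm_adjugate_le A j k

end Determinant

section Resultant

theorem sum_ite_mem_Icc {M : Type*} [AddCommMonoid M] {N j m : ℕ} (h : j + m < N)
    (F : ℕ → ℕ → M) :
    ∑ i : Fin N, (if (i : ℕ) ∈ Set.Icc j (j + m) then F i (i - j) else 0) =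
      ∑ k ∈ range (m + 1), F (j + k) k := by
  rw [Fin.sum_univ_eq_sum_range (fun i ↦ if i ∈ Set.Icc j (j + m) then F i (i - j) else 0) N,
    ← sum_filter]
  refine (sum_nbij' (j + ·) (· - j) ?_ ?_ ?_ ?_ ?_).symm <;> simp <;> omega

theorem sylvester_castAdd {R : Type*} [Semiring R] (f g : R[X]) (m n : ℕ) (i : Fin (m + n))
    (j : Fin m) : sylvester f g m n i (Fin.castAdd n j) =
      if (i : ℕ) ∈ Set.Icc (j : ℕ) (j + n) then g.coeff (i - j) else 0 := by
  simp [sylvester]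

theorem sylvester_natAdd {R : Type*} [Semiring R] (f g : R[X]) (m n : ℕ) (i : Fin (m + n))
    (j : Fin n) : sylvester f g m n i (Fin.natAdd m j) =
      if (i : ℕ) ∈ Set.Icc (j : ℕ) (j + m) then f.coeff (i - j) else 0 := by
  simp [sylvester]

variable {R : Type*} [CommRing R] {f g : R[X]} {m n : ℕ}

theorem vecMul_sylvester_castAdd (f : R[X]) (hg : g.natDegree ≤ n) (x : R) (j : Fin m) :
    ((fun i : Fin (m + n) ↦ x ^ (i : ℕ)) ᵥ* sylvester f g m n) (Fin.castAdd n j) =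
      x ^ (j : ℕ) * g.eval x := by
  simp only [vecMul, dotProduct, sylvester_castAdd, mul_ite, mul_zero]
  rw [sum_ite_mem_Icc (by omega) fun i k ↦ x ^ i * g.coeff k,
    eval_eq_sum_range' (Nat.lt_succ_of_le hg), mul_sum]
  exact sum_congr rfl fun k _ ↦ by ring

theorem vecMul_sylvester_natAdd (g : R[X]) (hf : f.natDegree ≤ m) (x : R) (j : Fin n) :
    ((fun i : Fin (m + n) ↦ x ^ (i : ℕ)) ᵥ* sylvester f g m n) (Fin.natAdd m j) =
      x ^ (j : ℕ) * f.eval x := by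
  simp only [vecMul, dotProduct, sylvester_natAdd, mul_ite, mul_zero]
  rw [sum_ite_mem_Icc (by omega) fun i k ↦ x ^ i * f.coeff k,
    eval_eq_sum_range' (Nat.lt_succ_of_le hf), mul_sum]
  exact sum_congr rfl fun k _ ↦ by ring

theorem prod_ite_eq_one_else {ι M : Type*} [Fintype ι] [DecidableEq ι] [CommMonoid M] (a : M)
    (j : ι) : ∏ i, (if i = j then 1 else a) = a ^ (Fintype.card ι - 1) := by
  rw [Finset.prod_ite]
  simp [filter_ne', card_erase_of_mem]

theorem prod_erase_castAdd {M : Type*} [CommMonoid M] (a b : M) (j : Fin m) :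
    ∏ c ∈ univ.erase (Fin.castAdd n j), Fin.append (fun _ ↦ a) (fun _ ↦ b) c =
      a ^ (m - 1) * b ^ n := by
  have other (i : Fin n) : Fin.natAdd m i ≠ Fin.castAdd n j := by simp [Fin.ext_iff]; omega
  simp_rw [← filter_ne', prod_filter, Fin.prod_univ_add, Fin.append_left, Fin.append_right]
  simp [other, prod_ite_eq_one_else]

theorem prod_erase_natAdd {M : Type*} [CommMonoid M] (a b : M) (j : Fin n) :
    ∏ c ∈ univ.erase (Fin.natAdd m j), Fin.append (fun _ ↦ a) (fun _ ↦ b) c =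
      a ^ m * b ^ (n - 1) := by
  have other (i : Fin m) : Fin.castAdd n i ≠ Fin.natAdd m j := by simp [Fin.ext_iff]; omega
  simp_rw [← filter_ne', prod_filter, Fin.prod_univ_add, Fin.append_left, Fin.append_right]
  simp [other, prod_ite_eq_one_else]

theorem norm_resultant_le {R : Type*} [NormedCommRing R] [NormOneClass R] {f g : R[X]}
    {m n : ℕ} {F G : ℝ} (hmn : 0 < m + n) (hf : f.natDegree ≤ m) (hg : g.natDegree ≤ n)
    (hF : ∑ k ∈ range (m + 1), ‖f.coeff k‖ ≤ F) (hG : ∑ k ∈ range (n + 1), ‖g.coeff k‖ ≤ G)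
    (x : R) :
    ‖resultant f g m n‖ ≤
      ‖f.eval x‖ * (∑ j ∈ range n, ‖x‖ ^ j) * (G ^ m * F ^ (n - 1)) +
        ‖g.eval x‖ * (∑ j ∈ range m, ‖x‖ ^ j) * (G ^ (m - 1) * F ^ n) := by
  have column (c : Fin (m + n)) :
      ∑ i, ‖sylvester f g m n i c‖ ≤ Fin.append (fun _ ↦ G) (fun _ ↦ F) c := by
    induction c using Fin.addCases with
    | left j =>
      simp only [sylvester_castAdd, apply_ite norm, norm_zero, Fin.append_left]
      rwa [sum_ite_mem_Icc (by omega) fun _ k ↦ ‖g.coeff k‖]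
    | right j =>
      simp only [sylvester_natAdd, apply_ite norm, norm_zero, Fin.append_right]
      rwa [sum_ite_mem_Icc (by omega) fun _ k ↦ ‖f.coeff k‖]
  have minor (j : Fin (m + n)) : ∏ c ∈ univ.erase j, ∑ i, ‖sylvester f g m n i c‖ ≤
      ∏ c ∈ univ.erase j, Fin.append (fun _ ↦ G) (fun _ ↦ F) c :=
    prod_le_prod (fun c _ ↦ sum_nonneg fun i _ ↦ norm_nonneg _) fun c _ ↦ column c
  have : 0 ≤ F := (sum_nonneg fun _ _ ↦ norm_nonneg _).trans hF
  have : 0 ≤ G := (sum_nonneg fun _ _ ↦ norm_nonneg _).trans hG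
  refine (norm_det_le_sum_norm_vecMul (sylvester f g m n)
    (v := fun i ↦ x ^ (i : ℕ)) (k := ⟨0, hmn⟩) (by simp)).trans ?_
  rw [Fin.sum_univ_add, add_comm]
  simp_rw [mul_sum, sum_mul, ← Fin.sum_univ_eq_sum_range]
  gcongr with j _ j _
  · rw [vecMul_sylvester_natAdd g hf, mul_comm]
    exact norm_mul_le_of_le le_rfl (norm_pow_le _ _)
  · exact (minor _).trans_eq (prod_erase_natAdd G F j)
  · rw [vecMul_sylvester_castAdd f hg, mul_comm]
    exact norm_mul_le_of_le le_rfl (norm_pow_le _ _)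
  · exact (minor _).trans_eq (prod_erase_castAdd G F j)

theorem resultant_ne_zero_of_isCoprime_map {R K : Type*} [CommRing R] [Field K] {φ : R →+* K}
    (hφ : Function.Injective φ) {f g : R[X]} {q : ℕ} (hf : f ≠ 0)
    (h : IsCoprime (f.map φ) (g.map φ)) (hq : g.natDegree ≤ q) :
    resultant f g f.natDegree q ≠ 0 := by
  obtain ⟨k, rfl⟩ := Nat.exists_eq_add_of_le hq
  rw [← map_ne_zero_iff φ hφ, ← resultant_map_map, ← natDegree_map_eq_of_injective hφ f,
    ← natDegree_map_eq_of_injective hφ g, resultant_add_right_deg _ _ _ _ _ le_rfl]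
  have hf' : f.map φ ≠ 0 := by rwa [Polynomial.map_ne_zero_iff hφ]
  exact mul_ne_zero (pow_ne_zero _ (leadingCoeff_ne_zero.mpr hf')) (resultant_ne_zero _ _ h)

theorem polyLength_eq_sum_range {f : ℤ[X]} {m : ℕ} (hf : f.natDegree ≤ m) :
    polyLength f = ∑ k ∈ range (m + 1), |(f.coeff k : ℝ)| := by
  refine sum_subset (range_subset_range.mpr (by omega)) fun k _ hk ↦ ?_
  rw [coeff_eq_zero_of_natDegree_lt (by simpa using hk), Int.cast_zero, abs_zero]

theorem one_le_of_resultant_ne_zero {f g : ℤ[X]} {m n : ℕ} {F G : ℝ} (hmn : 0 < m + n)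
    (hf : f.natDegree ≤ m) (hg : g.natDegree ≤ n) (hF : polyLength f ≤ F) (hG : polyLength g ≤ G)
    (h : resultant f g m n ≠ 0) (x : ℝ) :
    1 ≤ |aeval x f| * (∑ j ∈ range n, |x| ^ j) * (G ^ m * F ^ (n - 1)) +
      |aeval x g| * (∑ j ∈ range m, |x| ^ j) * (G ^ (m - 1) * F ^ n) := by
  have key := norm_resultant_le (f := f.map (Int.castRingHom ℝ)) (g := g.map (Int.castRingHom ℝ))
    (F := F) (G := G) hmn (natDegree_map_le.trans hf) (natDegree_map_le.trans hg)
    (by simpa [polyLength_eq_sum_range hf] using hF)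
    (by simpa [polyLength_eq_sum_range hg] using hG) x
  rw [resultant_map_map] at key
  simp only [eval_map, eq_intCast, Real.norm_eq_abs] at key
  exact (mod_cast Int.one_le_abs h : (1 : ℝ) ≤ |((f.resultant g m n : ℤ) : ℝ)|).trans key

end Resultant

/-! ### Zero estimate -/

section ExpDeriv

variable {R : Type*} [CommSemiring R]

/-- Differentiation of `q(z) exp(w z)` read on the polynomial factor:
`(q(z) exp(w z))' = (expDeriv w q)(z) exp(w z)`. -/
noncomputable def expDeriv (w : R) : R[X] →ₗ[R] R[X] :=
  derivative + w • LinearMap.id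

theorem expDeriv_apply (w : R) (q : R[X]) : expDeriv w q = derivative q + C w * q := by
  simp [expDeriv, smul_eq_C_mul]

theorem map_expDeriv_pow {S : Type*} [CommSemiring S] (φ : R →+* S) (w : R) (t : ℕ) (q : R[X]) :
    ((expDeriv w ^ t) q).map φ = (expDeriv (φ w) ^ t) (q.map φ) := by
  induction t with
  | zero => simp
  | succ t ih => simp [pow_succ', Module.End.mul_apply, expDeriv_apply, ← ih, derivative_map]

theorem natDegree_expDeriv_pow_le (w : R) (t : ℕ) (q : R[X]) :
    ((expDeriv w ^ t) q).natDegree ≤ q.natDegree := by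
  induction t with
  | zero => simp
  | succ t ih =>
    rw [pow_succ', Module.End.mul_apply, expDeriv_apply]
    exact natDegree_add_le_of_degree_le
      ((natDegree_derivative_le _).trans ((Nat.sub_le _ _).trans ih))
      ((natDegree_C_mul_le _ _).trans ih)

theorem coeff_expDeriv_pow_natDegree (w : R) (t : ℕ) (q : R[X]) :
    ((expDeriv w ^ t) q).coeff q.natDegree = w ^ t * q.leadingCoeff := by
  induction t with
  | zero => simp
  | succ t ih =>
    have drop : ((expDeriv w ^ t) q).coeff (q.natDegree + 1) = 0 :=
      coeff_eq_zero_of_natDegree_lt (Nat.lt_succ_of_le (natDegree_expDeriv_pow_le w t q))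
    rw [pow_succ', Module.End.mul_apply, expDeriv_apply, coeff_add, coeff_derivative, drop,
      coeff_C_mul, ih]
    ring

end ExpDeriv

section TopCoefficient

variable {R ι : Type*} [CommRing R]

theorem natDegree_det_le [Fintype ι] [DecidableEq ι] {A : Matrix ι ι R[X]} {D : ι → ℕ}
    (h : ∀ i j, (A i j).natDegree ≤ D j) : A.det.natDegree ≤ ∑ j, D j := by
  rw [det_apply]
  refine natDegree_sum_le_of_forall_le _ _ fun σ _ ↦ (natDegree_smul_le _ _).trans ?_
  exact (natDegree_prod_le _ _).trans (sum_le_sum fun j _ ↦ h _ j)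

theorem coeff_prod_sum_of_natDegree_le {s : Finset ι} {f : ι → R[X]} {D : ι → ℕ}
    (h : ∀ i ∈ s, (f i).natDegree ≤ D i) :
    (∏ i ∈ s, f i).coeff (∑ i ∈ s, D i) = ∏ i ∈ s, (f i).coeff (D i) := by
  classical
  induction s using Finset.induction_on with
  | empty => simp
  | insert a s ha ih =>
    obtain ⟨hfa, hs⟩ := forall_mem_insert _ _ _ |>.mp h
    rw [prod_insert ha, sum_insert ha, prod_insert ha, coeff_mul_add_eq_of_natDegree_le hfa
      ((natDegree_prod_le _ _).trans (sum_le_sum hs)), ih hs]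

theorem coeff_det_sum_of_natDegree_le [Fintype ι] [DecidableEq ι] {A : Matrix ι ι R[X]}
    {D : ι → ℕ} (h : ∀ i j, (A i j).natDegree ≤ D j) :
    A.det.coeff (∑ j, D j) = (of fun i j ↦ (A i j).coeff (D j)).det := by
  rw [det_apply, det_apply, finsetSum_coeff]
  refine sum_congr rfl fun σ _ ↦ ?_
  rw [coeff_smul, coeff_prod_sum_of_natDegree_le fun j _ ↦ h _ j]
  rfl

end TopCoefficient

theorem dvd_det_mul_of_dvd_mulVec {R n : Type*} [CommRing R] [Fintype n] [DecidableEq n]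
    {A : Matrix n n R} {v : n → R} {a : R} (h : ∀ i, a ∣ (A *ᵥ v) i) (j : n) :
    a ∣ A.det * v j := by
  have key : (A.adjugate *ᵥ (A *ᵥ v)) j = A.det * v j := by
    simp [mulVec_mulVec, adjugate_mul, smul_mulVec]
  rw [← key]
  exact dvd_sum fun i _ ↦ Dvd.dvd.mul_left (h i) _

section TaylorSeries

variable {R : Type*} [CommSemiring R]

theorem derivative_rescale (w : R) (f : PowerSeries R) :
    PowerSeries.derivative R (PowerSeries.rescale w f) =
      PowerSeries.C w * PowerSeries.rescale w (PowerSeries.derivative R f) := by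
  ext n
  simp only [PowerSeries.coeff_derivative, PowerSeries.coeff_rescale, PowerSeries.coeff_C_mul]
  ring

theorem derivative_taylor (x : R) (q : R[X]) :
    derivative (taylor x q) = taylor x (derivative q) := by
  simp [taylor_apply, derivative_comp]

theorem constantCoeff_rescale (w : R) (f : PowerSeries R) :
    PowerSeries.constantCoeff (PowerSeries.rescale w f) = PowerSeries.constantCoeff f := by
  rw [← PowerSeries.coeff_zero_eq_constantCoeff_apply, PowerSeries.coeff_rescale, pow_zero,
    one_mul, PowerSeries.coeff_zero_eq_constantCoeff_apply]

end TaylorSeries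

section ZeroEstimate

variable {K : Type*} [Field K]

theorem X_sub_C_pow_dvd_iff_coe_taylor {x : K} {m : ℕ} {p : K[X]} :
    (X - C x) ^ m ∣ p ↔ (PowerSeries.X : PowerSeries K) ^ m ∣ (taylor x p : K[X]) := by
  rw [X_sub_C_pow_dvd_iff, ← taylor_apply, Polynomial.X_pow_dvd_iff, PowerSeries.X_pow_dvd_iff]
  simp

theorem card_mul_le_natDegree_of_pow_dvd {σ : Type*} [Fintype σ] {x : σ → K}
    (hx : Function.Injective x) {m : ℕ} {p : K[X]} (hp : p ≠ 0)
    (h : ∀ s, (X - C (x s)) ^ m ∣ p) : Fintype.card σ * m ≤ p.natDegree := by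
  have hprod : ∏ s, (X - C (x s)) ^ m ∣ p :=
    prod_dvd_of_coprime
      (fun s _ t _ hst ↦ (pairwise_coprime_X_sub_C hx hst).pow) fun s _ ↦ h s
  have hdeg := natDegree_le_of_dvd hprod hp
  rw [natDegree_prod _ _ fun s _ ↦ pow_ne_zero m (X_sub_C_ne_zero (x s))] at hdeg
  simpa using hdeg

section ExpWronskian

variable {n : ℕ}

/-- The Wronskian matrix of the functions `q j (z) exp(w j z)`, with the exponential factors
removed. -/
noncomputable def expWronskian (w : Fin n → K) (q : Fin n → K[X]) : Matrix (Fin n) (Fin n) K[X] :=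
  of fun a j ↦ (expDeriv (w j) ^ (a : ℕ)) (q j)

theorem natDegree_det_expWronskian_le (w : Fin n → K) (q : Fin n → K[X]) :
    (expWronskian w q).det.natDegree ≤ ∑ j, (q j).natDegree :=
  natDegree_det_le fun _ _ ↦ natDegree_expDeriv_pow_le _ _ _

theorem det_expWronskian_ne_zero {w : Fin n → K} (hw : Function.Injective w) {q : Fin n → K[X]}
    (hq : ∀ j, q j ≠ 0) : (expWronskian w q).det ≠ 0 := by
  have leading : (of fun a j ↦ (expWronskian w q a j).coeff (q j).natDegree) =
      (vandermonde w)ᵀ * diagonal fun j ↦ (q j).leadingCoeff := by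
    ext a j
    simp [expWronskian, coeff_expDeriv_pow_natDegree, mul_diagonal]
  refine fun h ↦ absurd (congrArg (coeff · (∑ j, (q j).natDegree)) h) ?_
  simp only [coeff_det_sum_of_natDegree_le (A := expWronskian w q)
    fun _ _ ↦ natDegree_expDeriv_pow_le _ _ _, leading, det_mul, det_transpose, det_diagonal,
    coeff_zero]
  exact mul_ne_zero (det_vandermonde_ne_zero_iff.mpr hw)
    (prod_ne_zero_iff.mpr fun j _ ↦ leadingCoeff_ne_zero.mpr (hq j))

end ExpWronskian

variable [CharZero K]

/-- The Taylor series at `x` of `q(z) exp(w (z - x))`. -/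
noncomputable def expTaylor (x w : K) (q : K[X]) : PowerSeries K :=
  (taylor x q : K[X]) * PowerSeries.rescale w (PowerSeries.exp K)

theorem derivative_expTaylor (x w : K) (q : K[X]) :
    PowerSeries.derivative K (expTaylor x w q) = expTaylor x w (expDeriv w q) := by
  simp only [expTaylor, Derivation.leibniz, smul_eq_mul, derivative_rescale,
    PowerSeries.derivative_exp, PowerSeries.derivative_coe, derivative_taylor, expDeriv_apply,
    map_add, taylor_mul, taylor_C, Polynomial.coe_add, Polynomial.coe_mul, Polynomial.coe_C]
  ring

theorem iterate_derivative_expTaylor (x w : K) (q : K[X]) (t : ℕ) :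
    (PowerSeries.derivative K)^[t] (expTaylor x w q) = expTaylor x w ((expDeriv w ^ t) q) := by
  induction t with
  | zero => simp
  | succ t ih =>
    rw [Function.iterate_succ_apply', ih, derivative_expTaylor, pow_succ', Module.End.mul_apply]

theorem factorial_mul_coeff_expTaylor (x w : K) (q : K[X]) (t : ℕ) :
    (t.factorial : K) * PowerSeries.coeff t (expTaylor x w q) =
      ((expDeriv w ^ t) q).eval x := by
  rw [← PowerSeries.constantCoeff_iterate_derivative, iterate_derivative_expTaylor]
  simp [expTaylor, taylor_coeff_zero, constantCoeff_rescale]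

theorem X_pow_dvd_sum_expTaylor {ι : Type*} [Fintype ι] {x : K} {w c : ι → K} {q : ι → K[X]}
    {T : ℕ} (h : ∀ t < T, ∑ j, c j * ((expDeriv (w j) ^ t) (q j)).eval x = 0) (a : ℕ) :
    PowerSeries.X ^ (T - a) ∣
      ∑ j, PowerSeries.C (c j) * expTaylor x (w j) ((expDeriv (w j) ^ a) (q j)) := by
  rw [PowerSeries.X_pow_dvd_iff]
  intro t ht
  have factorial_ne_zero : (t.factorial : K) ≠ 0 := Nat.cast_ne_zero.mpr t.factorial_ne_zero
  refine (mul_eq_zero.mp ?_).resolve_left factorial_ne_zero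
  rw [← h (t + a) (by omega), map_sum, mul_sum]
  refine sum_congr rfl fun j _ ↦ ?_
  rw [PowerSeries.coeff_C_mul, mul_left_comm, factorial_mul_coeff_expTaylor, ← Module.End.mul_apply,
    pow_add]

theorem pow_dvd_det_expWronskian {n : ℕ} {x : K} {w c : Fin n → K} {q : Fin n → K[X]} {T : ℕ}
    (hc : ∃ j, c j ≠ 0)
    (h : ∀ t < T, ∑ j, c j * ((expDeriv (w j) ^ t) (q j)).eval x = 0) :
    (X - C x) ^ (T - (n - 1)) ∣ (expWronskian w q).det := by
  obtain ⟨j, hj⟩ := hc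
  set φ : K[X] →+* PowerSeries K :=
    Polynomial.coeToPowerSeries.ringHom.comp (taylorAlgHom x).toRingHom
  set u : Fin n → PowerSeries K :=
    fun j ↦ PowerSeries.C (c j) * PowerSeries.rescale (w j) (PowerSeries.exp K)
  have unit : IsUnit (u j) := by
    simpa [u, PowerSeries.isUnit_iff_constantCoeff, constantCoeff_rescale] using hj
  have rows (a : Fin n) :
      PowerSeries.X ^ (T - (n - 1)) ∣ (φ.mapMatrix (expWronskian w q) *ᵥ u) a := by
    have expand : (φ.mapMatrix (expWronskian w q) *ᵥ u) a = ∑ j, PowerSeries.C (c j) *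
        expTaylor x (w j) ((expDeriv (w j) ^ (a : ℕ)) (q j)) := by
      simp only [mulVec, dotProduct]
      exact sum_congr rfl fun j _ ↦ mul_left_comm _ _ _
    rw [expand]
    exact (pow_dvd_pow _ (by omega)).trans (X_pow_dvd_sum_expTaylor h a)
  have key := dvd_det_mul_of_dvd_mulVec rows j
  rw [unit.dvd_mul_right, ← RingHom.map_det] at key
  exact X_sub_C_pow_dvd_iff_coe_taylor.mpr key

theorem card_mul_le_sum_natDegree {n : ℕ} {σ : Type*} [Fintype σ] {w : Fin n → K}
    (hw : Function.Injective w) {q : Fin n → K[X]} (hq : ∀ j, q j ≠ 0) {x : σ → K}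
    (hx : Function.Injective x) {c : σ → Fin n → K} (hc : ∀ s, ∃ j, c s j ≠ 0) {T : ℕ}
    (h : ∀ s, ∀ t < T, ∑ j, c s j * ((expDeriv (w j) ^ t) (q j)).eval (x s) = 0) :
    Fintype.card σ * (T - (n - 1)) ≤ ∑ j, (q j).natDegree :=
  (card_mul_le_natDegree_of_pow_dvd hx (det_expWronskian_ne_zero hw hq)
    fun s ↦ pow_dvd_det_expWronskian (hc s) (h s)).trans (natDegree_det_expWronskian_le w q)

theorem exists_sum_expDeriv_ne_zero {ι σ : Type*} [Fintype ι] [Fintype σ] {w : ι → K}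
    (hw : Function.Injective w) {q : ι → K[X]} (hq : q ≠ 0) {D : ℕ}
    (hD : ∀ j, (q j).natDegree ≤ D) {x : σ → K} (hx : Function.Injective x) {c : σ → ι → K}
    (hc : ∀ s j, c s j ≠ 0) {T : ℕ}
    (hT : Fintype.card ι * D < Fintype.card σ * (T - (Fintype.card ι - 1))) :
    ∃ s, ∃ t < T, ∑ j, c s j * ((expDeriv (w j) ^ t) (q j)).eval (x s) ≠ 0 := by
  classical
  by_contra! h
  obtain ⟨j₀, hj₀⟩ := Function.ne_iff.mp hq
  set support : Finset ι := {j | q j ≠ 0}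
  have mem_support {j : ι} : j ∈ support ↔ q j ≠ 0 := by simp [support]
  set e := support.equivFin.symm
  have bound := card_mul_le_sum_natDegree (w := fun l ↦ w (e l)) (q := fun l ↦ q (e l))
    (c := fun s l ↦ c s (e l)) (T := T)
    (hw.comp (Subtype.val_injective.comp e.injective)) (fun l ↦ mem_support.mp (e l).2) hx
    (fun s ↦ ⟨support.equivFin ⟨j₀, mem_support.mpr hj₀⟩, hc _ _⟩) fun s t ht ↦ by
      rw [e.sum_comp fun j : support ↦ c s j * ((expDeriv (w j) ^ t) (q j)).eval (x s),
        sum_coe_sort support fun j ↦ c s j * ((expDeriv (w j) ^ t) (q j)).eval (x s), ← h s t ht]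
      refine sum_subset (subset_univ _) fun j _ hj ↦ ?_
      simp [not_not.mp (mem_support.not.mp hj)]
  refine hT.not_ge ?_
  calc Fintype.card σ * (T - (Fintype.card ι - 1))
      ≤ Fintype.card σ * (T - (#support - 1)) := by gcongr; exact card_le_univ _
    _ ≤ ∑ l : Fin #support, (q (e l)).natDegree := bound
    _ ≤ #support * D := by simpa using sum_le_sum fun l (_ : l ∈ univ) ↦ hD (e l)
    _ ≤ Fintype.card ι * D := by gcongr; exact card_le_univ _

end ZeroEstimate

/-! ### The box principle -/

section BoxPrinciple

variable {ι κ : Type*} [Fintype ι] [Fintype κ]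

theorem exists_ne_forall_abs_sub_le {α : Type*} [Fintype α] {Q : ℕ} (hQ : 0 < Q)
    (hcard : Q ^ Fintype.card κ < Fintype.card α) {W : ℝ} (hW : 0 < W) {v : α → κ → ℝ}
    (hv0 : ∀ a n, 0 ≤ v a n) (hvW : ∀ a n, v a n < W) :
    ∃ a b, a ≠ b ∧ ∀ n, |v a n - v b n| ≤ W / Q := by
  classical
  have hQ' : (0 : ℝ) < Q := mod_cast hQ
  have floor_lt (a : α) (n : κ) : ⌊v a n * Q / W⌋₊ < Q := by
    rw [Nat.floor_lt (by have := hv0 a n; positivity), div_lt_iff₀ hW, mul_comm]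
    exact mul_lt_mul_of_pos_left (hvW a n) hQ'
  obtain ⟨a, b, hab, hfloor⟩ := Fintype.exists_ne_map_eq_of_card_lt
    (fun (a : α) (n : κ) ↦ (⟨⌊v a n * Q / W⌋₊, floor_lt a n⟩ : Fin Q)) (by simpa using hcard)
  refine ⟨a, b, hab, fun n ↦ ?_⟩
  have same_cell : ⌊v a n * Q / W⌋₊ = ⌊v b n * Q / W⌋₊ := by simpa using congrFun hfloor n
  have close : |v a n * Q / W - v b n * Q / W| ≤ 1 :=
    (Int.abs_sub_lt_one_of_floor_eq_floor <| by
      rw [← Int.natCast_floor_eq_floor (by have := hv0 a n; positivity),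
        ← Int.natCast_floor_eq_floor (by have := hv0 b n; positivity), same_cell]).le
  rwa [← sub_div, ← sub_mul, abs_div, abs_mul, abs_of_pos hW, abs_of_pos hQ', div_le_one hW,
    ← le_div_iff₀ hQ'] at close

theorem exists_ne_zero_forall_abs_sum_mul_le [Nonempty ι] {N Q : ℕ} (hN : 0 < N) (hQ : 0 < Q)
    (hcard : Q ^ Fintype.card κ < (N + 1) ^ Fintype.card ι) {B : ℝ} {c : κ → ι → ℝ}
    (hc0 : ∀ n x, 0 ≤ c n x) (hcB : ∀ n x, c n x < B) (hB : 0 < B) :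
    ∃ p : ι → ℤ, p ≠ 0 ∧ (∀ x, |p x| ≤ N) ∧
      ∀ n, |∑ x, (p x : ℝ) * c n x| ≤ Fintype.card ι * N * B / Q := by
  classical
  have : (0 : ℝ) < N := mod_cast hN
  have : (0 : ℝ) < Fintype.card ι := mod_cast Fintype.card_pos
  have term_lt (a : ι → Fin (N + 1)) (n : κ) (x : ι) : ((a x : ℕ) : ℝ) * c n x < N * B :=
    calc ((a x : ℕ) : ℝ) * c n x ≤ N * c n x := by
          gcongr
          · exact hc0 n x
          · exact Fin.is_le (a x)
      _ < N * B := by gcongr; exact hcB n x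
  obtain ⟨a, b, hab, hclose⟩ := exists_ne_forall_abs_sub_le hQ
    (v := fun (a : ι → Fin (N + 1)) (n : κ) ↦ ∑ x, ((a x : ℕ) : ℝ) * c n x)
    (W := Fintype.card ι * N * B) (by simpa using hcard) (by positivity)
    (fun a n ↦ sum_nonneg fun x _ ↦ mul_nonneg (Nat.cast_nonneg _) (hc0 n x)) fun a n ↦ by
      simpa [mul_assoc] using sum_lt_sum_of_nonempty univ_nonempty fun x _ ↦ term_lt a n x
  refine ⟨fun x ↦ (a x : ℕ) - (b x : ℕ), fun h ↦ hab ?_, fun x ↦ ?_, fun n ↦ ?_⟩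
  · funext x
    exact Fin.ext (by exact_mod_cast sub_eq_zero.mp (congrFun h x : ((a x : ℕ) : ℤ) - b x = 0))
  · rw [abs_le]
    dsimp only
    omega
  · simpa [sub_mul] using hclose n

end BoxPrinciple

/-! ### Power series with small initial coefficients -/

theorem norm_le_of_hasSum_mul_pow {a : ℕ → ℂ} {b : ℕ → ℝ} {r ρ δ B : ℝ} {M : ℕ} {z w : ℂ}
    (hρ : 1 ≤ ρ) (hab : ∀ n, ‖a n‖ ≤ b n) (hδ : ∀ n < M, ‖a n‖ * r ^ n ≤ δ)
    (hB : HasSum (fun n ↦ b n * (ρ * r) ^ n) B) (hz : ‖z‖ ≤ r)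
    (hw : HasSum (fun n ↦ a n * z ^ n) w) : ‖w‖ ≤ M * δ + B / ρ ^ M := by
  have hr : 0 ≤ r := (norm_nonneg z).trans hz
  have head : HasSum (fun n ↦ if n ∈ range M then δ else 0) (M * δ) := by
    have := hasSum_sum_of_ne_finset_zero (L := SummationFilter.unconditional ℕ) (s := range M)
      (f := fun n ↦ if n ∈ range M then δ else 0) fun n hn ↦ if_neg hn
    rwa [sum_congr rfl fun n hn ↦ if_pos hn, sum_const, card_range, nsmul_eq_mul] at this
  refine hw.norm_le_of_bounded (head.add (hB.div_const (ρ ^ M))) fun n ↦ ?_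
  have hterm : ‖a n * z ^ n‖ ≤ ‖a n‖ * r ^ n := by
    rw [norm_mul, norm_pow]
    gcongr
  have hbn : 0 ≤ b n := (norm_nonneg _).trans (hab n)
  refine hterm.trans ?_
  by_cases hn : n < M
  · rw [if_pos (mem_range.mpr hn)]
    exact le_add_of_le_of_nonneg (hδ n hn) (by positivity)
  · rw [if_neg (mt mem_range.mp hn), zero_add, le_div_iff₀ (by positivity), mul_pow]
    calc ‖a n‖ * r ^ n * ρ ^ M ≤ b n * r ^ n * ρ ^ n := by
          gcongr
          · exact hab n
          · exact not_lt.mp hn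
      _ = b n * (ρ ^ n * r ^ n) := by ring

theorem exists_norm_sum_mul_le {ι : Type*} [Fintype ι] [Nonempty ι] {f : ι → ℂ → ℂ}
    {c : ι → ℕ → ℝ} (hc : ∀ x n, 0 ≤ c x n)
    (hf : ∀ x z, HasSum (fun n ↦ (c x n : ℂ) * z ^ n) (f x z)) {r ρ B B' : ℝ} (hr : 0 ≤ r)
    (hρ : 1 ≤ ρ) (hB : ∀ x, ‖f x r‖ < B) (hB' : ∀ x, ‖f x (ρ * r)‖ ≤ B') {M N Q : ℕ}
    (hN : 0 < N) (hQ : 0 < Q) (hcard : Q ^ M < (N + 1) ^ Fintype.card ι) :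
    ∃ p : ι → ℤ, p ≠ 0 ∧ (∀ x, |p x| ≤ N) ∧ ∀ z : ℂ, ‖z‖ ≤ r →
      ‖∑ x, (p x : ℂ) * f x z‖ ≤ Fintype.card ι * N * (M * B / Q + B' / ρ ^ M) := by
  have hasSum_norm (x : ι) {R : ℝ} (hR : 0 ≤ R) : HasSum (fun n ↦ c x n * R ^ n) ‖f x R‖ := by
    have h := hf x R
    simp only [← Complex.ofReal_pow, ← Complex.ofReal_mul] at h
    have hsum := (Complex.summable_ofReal.mp h.summable).hasSum
    rwa [h.unique (Complex.hasSum_ofReal.mpr hsum),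
      Complex.norm_of_nonneg (tsum_nonneg fun n ↦ mul_nonneg (hc x n) (by positivity))]
  have term_lt (n : ℕ) (x : ι) : c x n * r ^ n < B :=
    (le_hasSum (hasSum_norm x hr) n fun m _ ↦ mul_nonneg (hc x m) (by positivity)).trans_lt (hB x)
  obtain ⟨p, hp0, hpN, hp⟩ := exists_ne_zero_forall_abs_sum_mul_le (κ := Fin M) hN hQ
    (by simpa using hcard) (c := fun n x ↦ c x n * r ^ (n : ℕ))
    (fun n x ↦ mul_nonneg (hc x n) (by positivity)) (fun n x ↦ term_lt n x)
    ((norm_nonneg _).trans_lt (hB (Classical.arbitrary ι)))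
  refine ⟨p, hp0, hpN, fun z hz ↦ ?_⟩
  have hpN' (x : ι) : |(p x : ℝ)| ≤ N := mod_cast hpN x
  have expansion : HasSum (fun n ↦ (∑ x, (p x : ℂ) * c x n) * z ^ n) (∑ x, (p x : ℂ) * f x z) := by
    simpa only [sum_mul, mul_assoc] using hasSum_sum fun x _ ↦ (hf x z).mul_left (p x : ℂ)
  have majorant : HasSum (fun n ↦ (∑ x, N * c x n) * (ρ * r) ^ n)
      (∑ x, N * ‖f x (ρ * r : ℝ)‖) := by
    simpa only [sum_mul, mul_assoc] using hasSum_sum fun x _ ↦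
      (hasSum_norm x (by positivity : 0 ≤ ρ * r)).mul_left (N : ℝ)
  refine (norm_le_of_hasSum_mul_pow hρ (δ := Fintype.card ι * N * B / Q) (M := M) (fun n ↦ ?_)
    (fun n hn ↦ ?_) majorant hz expansion).trans ?_
  · refine (norm_sum_le _ _).trans (sum_le_sum fun x _ ↦ ?_)
    rw [norm_mul, Complex.norm_intCast, Complex.norm_of_nonneg (hc x n)]
    exact mul_le_mul_of_nonneg_right (hpN' x) (hc x n)
  · have h := hp ⟨n, hn⟩
    simp only [← mul_assoc, ← sum_mul, abs_mul, abs_of_nonneg (pow_nonneg hr n)] at h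
    exact mod_cast h
  · have : ∑ x, N * ‖f x (ρ * r : ℝ)‖ ≤ Fintype.card ι * (N * B') := by
      rw [← nsmul_eq_mul, ← card_univ]
      refine sum_le_card_nsmul _ _ _ fun x _ ↦ ?_
      gcongr
      exact mod_cast hB' x
    calc _ ≤ M * (Fintype.card ι * N * B / Q) + Fintype.card ι * (N * B') / ρ ^ M := by gcongr
      _ = _ := by ring

/-! ### The auxiliary function -/

theorem exists_hasSum_mul_pow_mul_exp {a w : ℝ} (ha : 0 ≤ a) (hw : 0 ≤ w) (i : ℕ) :
    ∃ c : ℕ → ℝ, (∀ n, 0 ≤ c n) ∧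
      ∀ z : ℂ, HasSum (fun n ↦ (c n : ℂ) * z ^ n) (a * (z ^ i * Complex.exp (w * z))) := by
  refine ⟨fun n ↦ if i ≤ n then a * (w ^ (n - i) / (n - i).factorial) else 0, fun n ↦ ?_,
    fun z ↦ ?_⟩
  · dsimp only
    split_ifs <;> positivity
  · rw [← (add_right_injective i).hasSum_iff]
    · have hexp : HasSum (fun l : ℕ ↦ (w * z) ^ l / (l.factorial : ℂ)) (Complex.exp (w * z)) := by
        rw [Complex.exp_eq_exp_ℂ]
        exact NormedSpace.expSeries_div_hasSum_exp _
      refine ((hexp.mul_left (z ^ i)).mul_left (a : ℂ)).congr_fun fun l ↦ ?_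
      simp [pow_add, mul_pow]
      ring
    · intro n hn
      have : ¬ i ≤ n := fun h ↦ hn ⟨n - i, Nat.add_sub_cancel' h⟩
      simp [this]

section ExpSum

variable {ι : Type*} [Fintype ι]

/-- The exponential polynomial `∑ j, q j (z) exp(w j z)`. -/
noncomputable def expSum (w : ι → ℂ) (q : ι → ℂ[X]) (z : ℂ) : ℂ :=
  ∑ j, (q j).eval z * Complex.exp (w j * z)

theorem hasDerivAt_expSum (w : ι → ℂ) (q : ι → ℂ[X]) (z : ℂ) :
    HasDerivAt (expSum w q) (expSum w (fun j ↦ expDeriv (w j) (q j)) z) z := by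
  have term (j : ι) : HasDerivAt (fun z ↦ (q j).eval z * Complex.exp (w j * z))
      ((expDeriv (w j) (q j)).eval z * Complex.exp (w j * z)) z := by
    refine (((q j).hasDerivAt z).mul ((hasDerivAt_id' z).const_mul (w j)).cexp).congr_deriv ?_
    rw [expDeriv_apply, eval_add, eval_mul, eval_C]
    ring
  exact HasDerivAt.fun_sum fun j _ ↦ term j

theorem iteratedDeriv_expSum (w : ι → ℂ) (q : ι → ℂ[X]) (t : ℕ) :
    iteratedDeriv t (expSum w q) = expSum w fun j ↦ (expDeriv (w j) ^ t) (q j) := by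
  induction t with
  | zero => simp
  | succ t ih =>
    funext z
    rw [iteratedDeriv_succ, ih, (hasDerivAt_expSum _ _ z).deriv]
    simp [pow_succ', Module.End.mul_apply]

theorem norm_expSum_expDeriv_le {w : ι → ℂ} {q : ι → ℂ[X]} {r ε : ℝ}
    (h : ∀ z, ‖z‖ ≤ r → ‖expSum w q z‖ ≤ ε) (t : ℕ) {s : ℂ} (hs : ‖s‖ + 1 ≤ r) :
    ‖expSum w (fun j ↦ (expDeriv (w j) ^ t) (q j)) s‖ ≤ t.factorial * ε := by
  have differentiable : Differentiable ℂ (expSum w q) :=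
    fun z ↦ (hasDerivAt_expSum w q z).differentiableAt
  have cauchy := Complex.norm_iteratedDeriv_le_of_forall_mem_sphere_norm_le t one_pos
    (c := s) differentiable.diffContOnCl fun z hz ↦ h z <|
      (norm_le_norm_add_norm_sub s z).trans (by rwa [norm_sub_rev, mem_sphere_iff_norm.mp hz])
  simpa [iteratedDeriv_expSum] using cauchy

end ExpSum

/-- The `t`-th derivative of `z ^ i * exp (j * z)` at `s` is `derivCoeff i j s t * exp (j * s)`. -/
noncomputable def derivCoeff (i j s t : ℕ) : ℕ :=
  ((expDeriv j ^ t) (X ^ i : ℕ[X])).eval s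

theorem natCast_derivCoeff {R : Type*} [CommSemiring R] (i j s t : ℕ) :
    (derivCoeff i j s t : R) = ((expDeriv (j : R) ^ t) (X ^ i : R[X])).eval (s : R) := by
  simpa [derivCoeff] using congrArg (eval (s : R))
    (map_expDeriv_pow (Nat.castRingHom R) j t (X ^ i))

theorem eval_expDeriv_le {w x D : ℕ} (hx : 1 ≤ x) {q : ℕ[X]} (hD : q.natDegree ≤ D) :
    (expDeriv w q).eval x ≤ (D + w) * q.eval x := by
  have hderiv : (derivative q).eval x ≤ D * q.eval x := by
    rw [derivative_eval, sum_def, eval_eq_sum, sum_def, mul_sum]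
    refine sum_le_sum fun n hn ↦ ?_
    have hn' : n ≤ D := (le_natDegree_of_mem_supp n hn).trans hD
    calc q.coeff n * n * x ^ (n - 1) ≤ q.coeff n * D * x ^ n := by gcongr; exact n.sub_le 1
      _ = D * (q.coeff n * x ^ n) := by ring
  rw [expDeriv_apply, eval_add, eval_mul, eval_C, add_mul]
  gcongr

theorem eval_expDeriv_pow_le {w x D : ℕ} (hx : 1 ≤ x) {q : ℕ[X]} (hD : q.natDegree ≤ D) (t : ℕ) :
    ((expDeriv w ^ t) q).eval x ≤ (D + w) ^ t * q.eval x := by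
  induction t with
  | zero => simp
  | succ t ih =>
    rw [pow_succ', Module.End.mul_apply, pow_succ', mul_assoc]
    exact (eval_expDeriv_le hx ((natDegree_expDeriv_pow_le w t q).trans hD)).trans
      (Nat.mul_le_mul_left _ ih)

theorem derivCoeff_le {i j s t S T I : ℕ} (hs : s < S) (ht : t ≤ T) (hi : i ≤ I) (hT : I + j ≤ T) :
    derivCoeff i j s t ≤ T ^ T * S ^ I := by
  rcases T.eq_zero_or_pos with rfl | hT0
  · obtain ⟨rfl, rfl, rfl⟩ : t = 0 ∧ i = 0 ∧ I = 0 := by omega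
    simp [derivCoeff]
  have hmono : derivCoeff i j s t ≤ derivCoeff i j S t := by
    simp only [derivCoeff, eval_eq_sum, sum_def]
    gcongr
  calc derivCoeff i j s t ≤ derivCoeff i j S t := hmono
    _ ≤ (i + j) ^ t * S ^ i := by
      simpa [derivCoeff] using
        eval_expDeriv_pow_le (w := j) (x := S) (by omega) (natDegree_X_pow_le (R := ℕ) i) t
    _ ≤ T ^ t * S ^ I := by
      gcongr <;> omega
    _ ≤ T ^ T * S ^ I := by gcongr

section AuxPoly

variable {I J d : ℕ}

/-- The auxiliary function `F(z) = ∑ p (i, j, k) e ^ k z ^ i exp(j z)` satisfies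
`F⁽ᵗ⁾(s) = aeval e (auxPoly p s t)`. -/
noncomputable def auxPoly (p : Fin I × Fin J × Fin d → ℤ) (s t : ℕ) : ℤ[X] :=
  ∑ x, C (p x * derivCoeff x.1 x.2.1 s t) * X ^ (x.2.2 + x.2.1 * s : ℕ)

theorem aeval_auxPoly {R : Type*} [CommRing R] (p : Fin I × Fin J × Fin d → ℤ) (s t : ℕ) (y : R) :
    aeval y (auxPoly p s t) = ∑ x, y ^ (x.2.1 * s : ℕ) *
      ((expDeriv ((x.2.1 : ℕ) : R) ^ t) (C (p x * y ^ (x.2.2 : ℕ)) * X ^ (x.1 : ℕ))).eval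
        (s : R) := by
  rw [auxPoly, map_sum]
  refine sum_congr rfl fun x _ ↦ ?_
  rw [← smul_eq_C_mul (p x * y ^ (x.2.2 : ℕ)), map_smul, eval_smul, ← natCast_derivCoeff]
  simp
  ring

theorem ofReal_aeval_auxPoly (p : Fin I × Fin J × Fin d → ℤ) (s t : ℕ) :
    ((aeval (Real.exp 1) (auxPoly p s t) : ℝ) : ℂ) = expSum (fun x ↦ ((x.2.1 : ℕ) : ℂ)) (fun x ↦
      (expDeriv ((x.2.1 : ℕ) : ℂ) ^ t) (C (p x * Complex.exp 1 ^ (x.2.2 : ℕ)) * X ^ (x.1 : ℕ)))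
        s := by
  have exp_one : Complex.exp 1 = algebraMap ℝ ℂ (Real.exp 1) := by simp
  rw [← Complex.coe_algebraMap, ← aeval_algebraMap_apply, ← exp_one, aeval_auxPoly, expSum]
  refine sum_congr rfl fun x _ ↦ ?_
  rw [mul_comm, ← Complex.exp_nat_mul 1 (x.2.1 * s), mul_one, Nat.cast_mul]

theorem natDegree_auxPoly_le (hd : d ≤ J) {S s : ℕ} (hs : s < S) (p : Fin I × Fin J × Fin d → ℤ)
    (t : ℕ) : (auxPoly p s t).natDegree ≤ J * S := by
  refine natDegree_sum_le_of_forall_le _ _ fun x _ ↦ (natDegree_C_mul_X_pow_le _ _).trans ?_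
  calc (x.2.2 + x.2.1 * s : ℕ) ≤ J + J * (S - 1) := by
        gcongr
        · omega
        · exact x.2.1.2.le
        · omega
    _ = J * S := by
      obtain ⟨S, rfl⟩ := Nat.exists_eq_add_of_lt hs
      simp
      ring

theorem polyLength_sum_C_mul_X_pow_le {ι : Type*} (s : Finset ι) (a : ι → ℤ) (n : ι → ℕ) :
    polyLength (∑ x ∈ s, C (a x) * X ^ n x) ≤ ∑ x ∈ s, |(a x : ℝ)| :=
  calc polyLength (∑ x ∈ s, C (a x) * X ^ n x)
      ≤ ∑ i ∈ range ((∑ x ∈ s, C (a x) * X ^ n x).natDegree + 1),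
          ∑ x ∈ s, if i = n x then |(a x : ℝ)| else 0 := by
        refine sum_le_sum fun i _ ↦ ?_
        rw [finsetSum_coeff, Int.cast_sum]
        refine (abs_sum_le_sum_abs _ _).trans (sum_le_sum fun x _ ↦ ?_)
        rw [coeff_C_mul_X_pow]
        split_ifs <;> simp
    _ ≤ ∑ x ∈ s, |(a x : ℝ)| := by
        rw [sum_comm]
        refine sum_le_sum fun x _ ↦ ?_
        rw [sum_ite_eq']
        split_ifs <;> simp

theorem polyLength_auxPoly_le {p : Fin I × Fin J × Fin d → ℤ} {N : ℕ} (hp : ∀ x, |p x| ≤ N)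
    {S T s t : ℕ} (hs : s < S) (ht : t ≤ T) (hT : I + J ≤ T) :
    polyLength (auxPoly p s t) ≤ (I * J * d : ℕ) * N * T ^ T * S ^ I := by
  refine (polyLength_sum_C_mul_X_pow_le _ _ _).trans ?_
  have term (x : Fin I × Fin J × Fin d) (_ : x ∈ univ) :
      |((p x * derivCoeff x.1 x.2.1 s t : ℤ) : ℝ)| ≤ N * (T ^ T * S ^ I) := by
    have hcoeff : (derivCoeff x.1 x.2.1 s t : ℝ) ≤ T ^ T * S ^ I := by
      exact_mod_cast derivCoeff_le hs ht x.1.2.le (by omega)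
    rw [Int.cast_mul, abs_mul, Int.cast_natCast, Nat.abs_cast]
    gcongr
    exact mod_cast hp x
  refine (sum_le_card_nsmul _ _ _ term).trans_eq ?_
  simp
  ring

theorem norm_mul_pow_mul_exp_lt {i j k : ℕ} (hi : i ≤ I) (hj : j ≤ J) (hk : k < d) {r : ℝ}
    (hr : 1 ≤ r) :
    ‖((Real.exp 1 ^ k : ℝ) : ℂ) * ((r : ℂ) ^ i * Complex.exp ((j : ℝ) * r))‖ <
      Real.exp 1 ^ d * (r ^ I * Real.exp (J * r)) := by
  have : 0 < r := one_pos.trans_le hr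
  rw [← Complex.ofReal_pow, ← Complex.ofReal_mul, ← Complex.ofReal_exp, ← Complex.ofReal_mul,
    ← Complex.ofReal_mul, Complex.norm_of_nonneg (by positivity)]
  calc Real.exp 1 ^ k * (r ^ i * Real.exp (j * r))
      < Real.exp 1 ^ d * (r ^ i * Real.exp (j * r)) := by
        gcongr
        exact Real.one_lt_exp_iff.mpr one_pos
    _ ≤ Real.exp 1 ^ d * (r ^ I * Real.exp (J * r)) := by gcongr

theorem exists_abs_aeval_auxPoly_le (hI : 0 < I) (hJ : 0 < J) (hd : 0 < d) {M N : ℕ}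
    (hM : I * J * d = 2 * d * M) (hN : 0 < N) {S : ℕ} (hS : 0 < S) (T : ℕ) {ρ : ℝ} (hρ : 1 ≤ ρ) :
    ∃ p : Fin I × Fin J × Fin d → ℤ, p ≠ 0 ∧ (∀ x, |p x| ≤ N) ∧ ∀ s < S, ∀ t < T,
      |aeval (Real.exp 1) (auxPoly p s t)| ≤ (I * J * d : ℕ) * N * T ^ T * S ^ I * Real.exp 1 ^ d *
        (M * Real.exp (J * S) / N ^ (2 * d) + ρ ^ I * Real.exp (J * S * ρ) / ρ ^ M) := by
  have nonempty : Nonempty (Fin I × Fin J × Fin d) := ⟨⟨0, hI⟩, ⟨0, hJ⟩, ⟨0, hd⟩⟩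
  have hS' : (1 : ℝ) ≤ S := mod_cast hS
  have : 0 < ρ := one_pos.trans_le hρ
  have card : Fintype.card (Fin I × Fin J × Fin d) = I * J * d := by simp [mul_assoc]
  choose c hc hsum using fun x : Fin I × Fin J × Fin d ↦ exists_hasSum_mul_pow_mul_exp
    (pow_nonneg (Real.exp_nonneg 1) x.2.2) (Nat.cast_nonneg (x.2.1 : ℕ)) x.1
  obtain ⟨p, hp0, hpN, hp⟩ := exists_norm_sum_mul_le hc hsum (zero_le_one.trans hS') hρ
    (fun x ↦ norm_mul_pow_mul_exp_lt x.1.2.le x.2.1.2.le x.2.2.2 hS')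
    (fun x ↦ by
      rw [← Complex.ofReal_mul]
      exact (norm_mul_pow_mul_exp_lt x.1.2.le x.2.1.2.le x.2.2.2
        (one_le_mul_of_one_le_of_one_le hρ hS')).le) hN
    (Q := N ^ (2 * d)) (M := M) (by positivity) (by
      rw [card, hM, ← pow_mul]
      have : I * J * d ≠ 0 := by positivity
      exact Nat.pow_lt_pow_left N.lt_succ_self (hM ▸ this))
  refine ⟨p, hp0, hpN, fun s hs t ht ↦ ?_⟩
  have hs' : ‖(s : ℂ)‖ + 1 ≤ S := by
    rw [Complex.norm_natCast]
    exact mod_cast hs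
  have ht' : (t.factorial : ℝ) ≤ T ^ T :=
    mod_cast (Nat.factorial_le ht.le).trans (Nat.factorial_le_pow T)
  have bound := norm_expSum_expDeriv_le (w := fun x : Fin I × Fin J × Fin d ↦ ((x.2.1 : ℕ) : ℂ))
    (q := fun x ↦ C (p x * Complex.exp 1 ^ (x.2.2 : ℕ)) * X ^ (x.1 : ℕ))
    (fun z hz ↦ by
      simpa only [expSum, eval_mul, eval_C, eval_pow, eval_X, mul_assoc, Complex.ofReal_pow,
        Complex.ofReal_exp, Complex.ofReal_one, Complex.ofReal_natCast, card] using hp z hz) t hs'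
  rw [← ofReal_aeval_auxPoly, Complex.norm_real, Real.norm_eq_abs] at bound
  refine bound.trans ((mul_le_mul_of_nonneg_right ht' (by positivity)).trans_eq ?_)
  rw [mul_assoc (J : ℝ) S ρ, mul_comm ρ]
  push_cast
  ring

theorem exists_aeval_auxPoly_ne_zero {K : Type*} [Field K] [CharZero K] {α : K} (hα : α ≠ 0)
    (hli : LinearIndependent ℤ fun k : Fin d ↦ α ^ (k : ℕ)) {p : Fin I × Fin J × Fin d → ℤ}
    (hp : p ≠ 0) {S T : ℕ} (hT : J * (I - 1) < S * (T - (J - 1))) :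
    ∃ s < S, ∃ t < T, aeval α (auxPoly p s t) ≠ 0 := by
  obtain ⟨x, hx⟩ := Function.ne_iff.mp hp
  set q : Fin J → K[X] :=
    fun j ↦ ∑ i : Fin I, ∑ k : Fin d, C (p (i, j, k) * α ^ (k : ℕ)) * X ^ (i : ℕ)
  have hq : q ≠ 0 := by
    refine fun h ↦ hx (Fintype.linearIndependent_iff.mp hli (fun k ↦ p (x.1, x.2.1, k)) ?_ x.2.2)
    have coeff_eq := congrArg (coeff · (x.1 : ℕ)) (congrFun h x.2.1)
    simp only [q, finsetSum_coeff, coeff_C_mul_X_pow, Fin.val_inj] at coeff_eq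
    rw [sum_comm] at coeff_eq
    simpa using coeff_eq
  have hqdeg (j : Fin J) : (q j).natDegree ≤ I - 1 :=
    natDegree_sum_le_of_forall_le _ _ fun i _ ↦ natDegree_sum_le_of_forall_le _ _ fun k _ ↦
      (natDegree_C_mul_X_pow_le _ _).trans (by omega)
  have aeval_eq (s t : ℕ) : aeval α (auxPoly p s t) =
      ∑ j : Fin J, α ^ (j * s : ℕ) * ((expDeriv ((j : ℕ) : K) ^ t) (q j)).eval (s : K) := by
    simp_rw [aeval_auxPoly, Fintype.sum_prod_type, q, map_sum, eval_finsetSum, mul_sum]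
    exact sum_comm
  obtain ⟨s, t, ht, hst⟩ := exists_sum_expDeriv_ne_zero (w := fun j : Fin J ↦ ((j : ℕ) : K))
    (x := fun s : Fin S ↦ ((s : ℕ) : K)) (c := fun s j ↦ α ^ (j * s : ℕ)) (q := q) (T := T)
    (Nat.cast_injective.comp Fin.val_injective) hq hqdeg
    (Nat.cast_injective.comp Fin.val_injective) (fun s j ↦ pow_ne_zero _ hα) (by simpa using hT)
  exact ⟨s, s.2, t, ht, by rwa [aeval_eq]⟩

end AuxPoly

/-! ### Irreducible polynomials -/

theorem exists_resultant_auxPoly_ne_zero {P : ℤ[X]} (hP : Irreducible P) (hP0 : P.coeff 0 ≠ 0)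
    (hd : P.natDegree ≠ 0) {I J : ℕ} {p : Fin I × Fin J × Fin P.natDegree → ℤ} (hp : p ≠ 0)
    {S T : ℕ} (hT : J * (I - 1) < S * (T - (J - 1))) :
    ∃ s < S, ∃ t < T, ∀ q, (auxPoly p s t).natDegree ≤ q →
      resultant P (auxPoly p s t) P.natDegree q ≠ 0 := by
  have hinj : Function.Injective (Int.castRingHom ℚ) := Int.cast_injective
  have hirr : Irreducible (P.map (Int.castRingHom ℚ)) :=
    (IsPrimitive.Int.irreducible_iff_irreducible_map_cast (hP.isPrimitive hd)).mp hP
  obtain ⟨α, hα⟩ := IsAlgClosed.exists_aeval_eq_zero ℂ _ hirr.degree_pos.ne'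
  have minpoly_eq := minpoly.eq_of_irreducible hirr hα
  have hα0 : α ≠ 0 := by
    rintro rfl
    rw [← coeff_zero_eq_aeval_zero', coeff_map] at hα
    exact hP0 (by simpa using hα)
  have hdeg : (minpoly ℚ α).natDegree = P.natDegree := by
    rw [← minpoly_eq, natDegree_mul_C (by simpa using hirr.ne_zero),
      natDegree_map_eq_of_injective hinj]
  have hli : LinearIndependent ℤ fun k : Fin P.natDegree ↦ α ^ (k : ℕ) :=
    (hdeg ▸ linearIndependent_pow (K := ℚ) α).restrict_scalars' ℤ
  obtain ⟨s, hs, t, ht, hst⟩ := exists_aeval_auxPoly_ne_zero hα0 hli hp hT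
  refine ⟨s, hs, t, ht, fun q hq ↦
    resultant_ne_zero_of_isCoprime_map hinj hP.ne_zero (hirr.coprime_iff_not_dvd.mpr ?_) hq⟩
  rintro ⟨g, hg⟩
  apply hst
  rw [← aeval_map_algebraMap ℚ, show algebraMap ℤ ℚ = Int.castRingHom ℚ from rfl, hg, map_mul, hα,
    zero_mul]

theorem exists_small_resultant_ne_zero {P : ℤ[X]} (hP : Irreducible P) (hP0 : P.coeff 0 ≠ 0)
    {d : ℕ} (hPd : P.natDegree = d) (hd : 0 < d) {I J M N : ℕ} (hI : 0 < I) (hdJ : d ≤ J)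
    (hM : I * J * d = 2 * d * M) (hN : 0 < N) {ρ : ℝ} (hρ : 1 ≤ ρ) {Y : ℝ}
    (hY : (I * J * d : ℕ) * N * (I + J : ℕ) ^ (I + J) * J ^ I ≤ Y) :
    ∃ Q : ℤ[X], Q.natDegree ≤ J ^ 2 ∧ polyLength Q ≤ Y ∧ resultant P Q d (J ^ 2) ≠ 0 ∧
      |aeval (Real.exp 1) Q| ≤ Y * Real.exp 1 ^ d *
        (M * Real.exp (J * J) / N ^ (2 * d) + ρ ^ I * Real.exp (J * J * ρ) / ρ ^ M) := by
  subst hPd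
  have hJ : 0 < J := hd.trans_le hdJ
  obtain ⟨p, hp0, hpN, hp⟩ := exists_abs_aeval_auxPoly_le hI hJ hd hM hN hJ (I + J) hρ
  obtain ⟨s, hs, t, ht, hres⟩ := exists_resultant_auxPoly_ne_zero hP hP0 hd.ne' hp0
    (S := J) (T := I + J) (Nat.mul_lt_mul_of_pos_left (by omega) hJ)
  have hdeg : (auxPoly p s t).natDegree ≤ J ^ 2 := sq J ▸ natDegree_auxPoly_le hdJ hs p t
  exact ⟨auxPoly p s t, hdeg, (polyLength_auxPoly_le hpN hs ht.le le_rfl).trans hY, hres _ hdeg,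
    (hp s hs t ht).trans (by gcongr)⟩

theorem geom_sum_le_pow {x : ℝ} (hx : 2 ≤ x) (n : ℕ) : ∑ j ∈ range n, x ^ j ≤ x ^ n := by
  induction n with
  | zero => simp
  | succ n ih =>
    rw [sum_range_succ, pow_succ]
    have : 0 ≤ x ^ n := by positivity
    nlinarith

theorem one_le_abs_aeval_mul_add_of_irreducible {P : ℤ[X]} (hP : Irreducible P)
    (hP0 : P.coeff 0 ≠ 0) {d : ℕ} (hPd : P.natDegree = d) (hd : 0 < d) {L : ℝ}
    (hL : polyLength P ≤ L) (hL1 : 1 ≤ L) {I J M N : ℕ} (hI : 0 < I) (hdJ : d ≤ J)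
    (hM : I * J * d = 2 * d * M) (hN : 0 < N) {ρ : ℝ} (hρ : 1 ≤ ρ) {Y : ℝ}
    (hY : (I * J * d : ℕ) * N * (I + J : ℕ) ^ (I + J) * J ^ I ≤ Y) :
    1 ≤ |aeval (Real.exp 1) P| * (Real.exp 1 ^ J ^ 2 * L ^ J ^ 2 * Y ^ d) +
      L ^ J ^ 2 * Y ^ d * Real.exp 1 ^ (2 * d) *
        (M * Real.exp (J * J) / N ^ (2 * d) + ρ ^ I * Real.exp (J * J * ρ) / ρ ^ M) := by
  obtain ⟨Q, hQdeg, hQL, hres, hQ⟩ :=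
    exists_small_resultant_ne_zero hP hP0 hPd hd hI hdJ hM hN hρ hY
  have hY0 : 0 ≤ Y := le_trans (by positivity) hY
  have he : (2 : ℝ) ≤ Real.exp 1 := Real.add_one_le_exp 1 |>.trans' (by norm_num)
  have key := one_le_of_resultant_ne_zero (by omega) hPd.le hQdeg hL hQL hres (Real.exp 1)
  rw [abs_of_pos (Real.exp_pos 1)] at key
  calc (1 : ℝ) ≤ _ := key
    _ ≤ |aeval (Real.exp 1) P| * Real.exp 1 ^ J ^ 2 * (Y ^ d * L ^ J ^ 2) +
        Y * Real.exp 1 ^ d * (M * Real.exp (J * J) / N ^ (2 * d) +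
          ρ ^ I * Real.exp (J * J * ρ) / ρ ^ M) * Real.exp 1 ^ d * (Y ^ (d - 1) * L ^ J ^ 2) := by
      gcongr
      · exact geom_sum_le_pow he _
      · exact Nat.sub_le _ _
      · exact geom_sum_le_pow he _
    _ = _ := by
      rw [← pow_sub_one_mul hd.ne' Y]
      ring

/-! ### Choice of the parameters -/

theorem exists_base_and_exponent {h : ℝ} (hh : 1 ≤ h) :
    ∃ ρ A : ℕ, 60 * h ≤ ρ ∧ ρ ≤ 61 * h ∧ 40 ≤ A ∧ A + 1 ≤ ρ ∧
      Real.exp (220 * h) ≤ (ρ : ℝ) ^ A ∧ (ρ : ℝ) ^ A ≤ Real.exp (225 * h) := by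
  set ρ := ⌈60 * h⌉₊
  have hρ : 60 * h ≤ ρ := Nat.le_ceil _
  have hρ' : ρ ≤ 61 * h := by
    have : (ρ : ℝ) < 60 * h + 1 := Nat.ceil_lt_add_one (by positivity)
    linarith
  have exp_le : Real.exp 4 ≤ ρ :=
    calc Real.exp 4 = Real.exp 1 ^ 4 := by rw [← Real.exp_nat_mul]; norm_num
      _ ≤ 2.7182818286 ^ 4 := by gcongr; exact Real.exp_one_lt_d9.le
      _ ≤ 60 * h := by linarith
      _ ≤ ρ := hρ
  have le_exp : ρ ≤ Real.exp (5 * h) :=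
    calc (ρ : ℝ) ≤ 61 * h := hρ'
      _ ≤ 2.7182818283 ^ 5 * h ^ 5 := by
        gcongr
        · norm_num
        · exact le_self_pow₀ hh (by norm_num)
      _ ≤ (Real.exp 1 * h) ^ 5 := by
        rw [mul_pow]
        gcongr
        exact Real.exp_one_gt_d9.le
      _ ≤ Real.exp h ^ 5 := by gcongr; exact Real.exp_one_mul_le_exp
      _ = Real.exp (5 * h) := by rw [← Real.exp_nat_mul]; norm_num
  obtain ⟨n, hn, hn'⟩ := exists_nat_pow_near (Real.one_le_exp (by positivity : 0 ≤ 220 * h))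
    ((Real.one_lt_exp_iff.mpr four_pos).trans_le exp_le)
  refine ⟨ρ, n + 1, hρ, hρ', ?_, ?_, hn'.le, ?_⟩
  · have := hn'.trans_le (pow_le_pow_left₀ (by positivity) le_exp (n + 1))
    rw [← Real.exp_nat_mul, Real.exp_lt_exp] at this
    have : (40 : ℝ) ≤ (n + 1 : ℕ) := by nlinarith
    exact mod_cast this
  · have := (pow_le_pow_left₀ (Real.exp_nonneg 4) exp_le n).trans hn
    rw [← Real.exp_nat_mul, Real.exp_le_exp] at this
    have : ((n + 1 + 1 : ℕ) : ℝ) ≤ ρ := by push_cast; linarith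
    exact mod_cast this
  · calc (ρ : ℝ) ^ (n + 1) ≤ Real.exp (220 * h) * Real.exp (5 * h) := by
          rw [pow_succ]; gcongr
      _ = Real.exp (225 * h) := by rw [← Real.exp_add]; ring_nf

theorem auxPoly_length_bound_le {d A ρ : ℕ} (hd : 0 < d) (hA : 40 ≤ A) (hAρ : A + 1 ≤ ρ)
    (hdρ : 40 * d ≤ ρ) :
    (40 * d * A * (40 * d) * d) * ρ ^ (150 * d * A) *
      (40 * d * A + 40 * d) ^ (40 * d * A + 40 * d) * (40 * d) ^ (40 * d * A) ≤
        ρ ^ (273 * d * A) := by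
  have hT : 40 * d * A + 40 * d ≤ ρ ^ 2 := by nlinarith
  calc (40 * d * A * (40 * d) * d) * ρ ^ (150 * d * A) *
      (40 * d * A + 40 * d) ^ (40 * d * A + 40 * d) * (40 * d) ^ (40 * d * A)
      ≤ (ρ * ρ * ρ * ρ) * ρ ^ (150 * d * A) * (ρ ^ 2) ^ (40 * d * A + 40 * d) *
        ρ ^ (40 * d * A) := by
        gcongr <;> omega
    _ = ρ ^ (4 + 150 * d * A + 2 * (40 * d * A + 40 * d) + 40 * d * A) := by ring
    _ ≤ ρ ^ (273 * d * A) := by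
        gcongr
        · omega
        · nlinarith

theorem one_le_mul_pow_of_one_le_add {x W : ℝ} (hW : 4 ≤ W)
    (h : 1 ≤ x * (W ^ 8 * W ^ 8 * W ^ 273) + W ^ 8 * W ^ 273 * W *
      (W * W ^ 8 / W ^ 300 + W ^ 40 * W ^ 444 / W ^ 800)) : 1 ≤ x * W ^ 290 := by
  have hW0 : 0 < W := by positivity
  have inv_pow_le (k : ℕ) (hk : k ≠ 0) : 1 / W ^ k ≤ 1 / 4 :=
    one_div_le_one_div_of_le four_pos (hW.trans (le_self_pow₀ (by linarith) hk))
  have first_error : W ^ 8 * W ^ 273 * W * (W * W ^ 8 / W ^ 300) ≤ 1 / 4 :=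
    (inv_pow_le 9 (by norm_num)).trans_eq' (by field_simp)
  have second_error : W ^ 8 * W ^ 273 * W * (W ^ 40 * W ^ 444 / W ^ 800) ≤ 1 / 4 :=
    (inv_pow_le 34 (by norm_num)).trans_eq' (by field_simp)
  have main_term : 1 / 2 ≤ x * W ^ 289 := by
    rw [mul_add] at h
    have : W ^ 8 * W ^ 8 * W ^ 273 = W ^ 289 := by ring
    rw [this] at h
    linarith
  calc 1 ≤ x * W ^ 289 * W := by nlinarith [main_term]
    _ = x * W ^ 290 := by ring

theorem mul_sq_mul_le_pow {d A ρ : ℕ} (hd : 0 < d) (hA : 40 ≤ A) (hAρ : A + 1 ≤ ρ)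
    (hdρ : 40 * d ≤ ρ) : 800 * d ^ 2 * A ≤ (ρ ^ A) ^ d ^ 2 :=
  calc 800 * d ^ 2 * A ≤ (40 * d) * (40 * d) * A := by nlinarith
    _ ≤ ρ * ρ * ρ := by gcongr; omega
    _ = ρ ^ 3 := by ring
    _ ≤ ρ ^ (A * d ^ 2) :=
      Nat.pow_le_pow_right (by omega) (by nlinarith [Nat.pow_pos (n := 2) hd])
    _ = (ρ ^ A) ^ d ^ 2 := pow_mul _ _ _

theorem exp_le_pow_of_le_mul {b x y : ℝ} (hy : Real.exp y ≤ b) (k : ℕ) (hx : x ≤ k * y) :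
    Real.exp x ≤ b ^ k :=
  calc Real.exp x ≤ Real.exp (k * y) := Real.exp_le_exp.mpr hx
    _ = Real.exp y ^ k := Real.exp_nat_mul _ _
    _ ≤ b ^ k := by gcongr

/- The parameters of the box principle are `J = 40 d`, `I = J A`, `M = 800 d² A` and
`N = ρ ^ (150 d A)`, with `ρ` the ratio of the two radii. They make every factor a bounded power of
`W = ρ ^ (A d²)`: `N ^ (2 d) = W ^ 300` beats the `d`-th power of the length of `Q`, at most
`W ^ 273`, while `ρ ^ M = W ^ 800` beats `exp(J² ρ)`, which is at most `W ^ 444`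
because `ρ ≤ 61 h` and `exp(220 h) ≤ ρ ^ A`. -/
theorem one_le_abs_aeval_mul_pow_of_irreducible {P : ℤ[X]} (hP : Irreducible P)
    (hP0 : P.coeff 0 ≠ 0) {d : ℕ} (hPd : P.natDegree = d) (hd : 0 < d) {h : ℝ} (hdh : d ≤ h)
    (hL : polyLength P ≤ Real.exp h) {ρ A : ℕ} (hρ : 60 * h ≤ ρ) (hρ' : ρ ≤ 61 * h) (hA : 40 ≤ A)
    (hAρ : A + 1 ≤ ρ) (le_pow : Real.exp (220 * h) ≤ (ρ : ℝ) ^ A) :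
    1 ≤ |aeval (Real.exp 1) P| * (((ρ : ℝ) ^ A) ^ d ^ 2) ^ 290 := by
  have hd1 : (1 : ℝ) ≤ d := mod_cast hd
  have hdd : (d : ℝ) ≤ d ^ 2 := le_self_pow₀ hd1 two_ne_zero
  have hdh' : (d : ℝ) ^ 2 ≤ d ^ 2 * h := le_mul_of_one_le_right (sq_nonneg _) (hd1.trans hdh)
  have hdρ' : (d : ℝ) ^ 2 * ρ ≤ d ^ 2 * (61 * h) := by gcongr
  have hρ0 : 0 < ρ := by omega
  have hρ1 : (1 : ℝ) ≤ ρ := mod_cast hρ0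
  have hdρ : 40 * d ≤ ρ := by
    have : (40 : ℝ) * d ≤ ρ := by linarith
    exact mod_cast this
  set W : ℝ := ((ρ : ℝ) ^ A) ^ d ^ 2 with hW_def
  have exp_le {x : ℝ} (k : ℕ) (hx : x ≤ k * ((d ^ 2 : ℕ) * (220 * h))) : Real.exp x ≤ W ^ k :=
    exp_le_pow_of_le_mul (exp_le_pow_of_le_mul le_pow _ le_rfl) k hx
  have hM : ((800 * d ^ 2 * A : ℕ) : ℝ) ≤ W := by
    rw [hW_def]
    exact mod_cast mul_sq_mul_le_pow hd hA hAρ hdρ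
  have hW : 4 ≤ W := by
    have : 4 ≤ 800 * d ^ 2 * A := by nlinarith [Nat.pow_pos (n := 2) hd]
    exact le_trans (mod_cast this) hM
  have hY : (40 * d * A * (40 * d) * d : ℕ) * (ρ ^ (150 * d * A) : ℕ) *
      (40 * d * A + 40 * d : ℕ) ^ (40 * d * A + 40 * d) * (40 * d : ℕ) ^ (40 * d * A) ≤
        (ρ : ℝ) ^ (273 * d * A) := mod_cast auxPoly_length_bound_le hd hA hAρ hdρ
  have hYd : ((ρ : ℝ) ^ (273 * d * A)) ^ d = W ^ 273 := by rw [hW_def]; ring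
  have hN : ((ρ ^ (150 * d * A) : ℕ) : ℝ) ^ (2 * d) = W ^ 300 := by
    rw [hW_def, Nat.cast_pow]; ring
  have hρM : (ρ : ℝ) ^ (800 * d ^ 2 * A) = W ^ 800 := by rw [hW_def]; ring
  have hρI : (ρ : ℝ) ^ (40 * d * A) ≤ W ^ 40 := by
    simp only [hW_def, ← pow_mul]
    exact pow_le_pow_right₀ hρ1 (by nlinarith [Nat.le_self_pow two_ne_zero d])
  have key := one_le_abs_aeval_mul_add_of_irreducible hP hP0 hPd hd hL
    (Real.one_le_exp (by linarith)) (M := 800 * d ^ 2 * A) (by positivity)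
    (by omega) (by ring) (by positivity) hρ1 hY
  rw [hYd, hN, hρM, ← Real.exp_nat_mul, ← Real.exp_nat_mul, ← Real.exp_nat_mul] at key
  refine one_le_mul_pow_of_one_le_add hW (key.trans ?_)
  gcongr
  · exact exp_le 8 (by push_cast; linarith)
  · exact exp_le 8 (by push_cast; linarith)
  · exact exp_le 8 (by push_cast; linarith)
  · exact (exp_le 1 (by push_cast; linarith)).trans_eq (pow_one W)
  · exact exp_le 8 (by push_cast; linarith)
  · exact exp_le 444 (by push_cast; linarith)

theorem exp_le_abs_aeval_of_irreducible_of_polyLength_le {P : ℤ[X]} (hP : Irreducible P)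
    (hP0 : P.coeff 0 ≠ 0) {d : ℕ} (hPd : P.natDegree = d) (hd : 0 < d) {h : ℝ} (hdh : d ≤ h)
    (hL : polyLength P ≤ Real.exp h) :
    Real.exp (-(65250 * d ^ 2 * h)) ≤ |aeval (Real.exp 1) P| := by
  obtain ⟨ρ, A, hρ, hρ', hA, hAρ, le_pow, pow_le⟩ :=
    exists_base_and_exponent ((Nat.one_le_cast.mpr hd).trans hdh)
  rw [Real.exp_neg, inv_le_iff_one_le_mul₀ (Real.exp_pos _)]
  calc 1 ≤ |aeval (Real.exp 1) P| * (((ρ : ℝ) ^ A) ^ d ^ 2) ^ 290 :=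
        one_le_abs_aeval_mul_pow_of_irreducible hP hP0 hPd hd hdh hL hρ hρ' hA hAρ le_pow
    _ ≤ |aeval (Real.exp 1) P| * (Real.exp (225 * h) ^ d ^ 2) ^ 290 := by gcongr
    _ = |aeval (Real.exp 1) P| * Real.exp (65250 * d ^ 2 * h) := by
      rw [← Real.exp_nat_mul, ← Real.exp_nat_mul]
      push_cast
      ring_nf

/-! ### From irreducible polynomials to all polynomials -/

/-- The logarithmic Mahler measure of an integer polynomial. Unlike the length, it is exactly
additive on products. -/
noncomputable def logMahler (P : ℤ[X]) : ℝ := (P.map (Int.castRingHom ℂ)).logMahlerMeasure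

theorem exp_logMahler {P : ℤ[X]} (hP : P ≠ 0) :
    Real.exp (logMahler P) = (P.map (Int.castRingHom ℂ)).mahlerMeasure := by
  rw [logMahler, logMahlerMeasure_eq_log_MahlerMeasure,
    Real.exp_log (one_pos.trans_le (one_le_mahlerMeasure_of_ne_zero hP))]

theorem logMahler_nonneg {P : ℤ[X]} (hP : P ≠ 0) : 0 ≤ logMahler P := by
  rw [← Real.one_le_exp_iff, exp_logMahler hP]
  exact one_le_mahlerMeasure_of_ne_zero hP

theorem logMahler_mul {P Q : ℤ[X]} (hP : P ≠ 0) (hQ : Q ≠ 0) :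
    logMahler (P * Q) = logMahler P + logMahler Q := by
  simp only [logMahler, Polynomial.map_mul]
  apply logMahlerMeasure_mul_eq_add_logMahlerMeasure
  rw [← Polynomial.map_mul]
  exact (Polynomial.map_ne_zero_iff Int.cast_injective).mpr (mul_ne_zero hP hQ)

theorem exp_logMahler_le_polyLength {P : ℤ[X]} (hP : P ≠ 0) :
    Real.exp (logMahler P) ≤ polyLength P := by
  rw [exp_logMahler hP]
  refine (mahlerMeasure_le_sum_norm_coeff _).trans_eq ?_
  rw [sum_over_range _ (by simp), natDegree_map_eq_of_injective (RingHom.injective_int _)]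
  simp [polyLength]

theorem polyLength_le_exp {P : ℤ[X]} (hP : P ≠ 0) :
    polyLength P ≤ Real.exp (logMahler P + P.natDegree) :=
  calc polyLength P
      ≤ ∑ i ∈ range (P.natDegree + 1), (P.natDegree.choose i : ℝ) * Real.exp (logMahler P) := by
        refine sum_le_sum fun i _ ↦ ?_
        rw [exp_logMahler hP]
        simpa [natDegree_map_eq_of_injective (RingHom.injective_int (Int.castRingHom ℂ))] using
          norm_coeff_le_choose_mul_mahlerMeasure i (P.map (Int.castRingHom ℂ))
    _ = 2 ^ P.natDegree * Real.exp (logMahler P) := by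
        rw [← sum_mul, ← Nat.cast_sum, Nat.sum_range_choose, Nat.cast_pow, Nat.cast_ofNat]
    _ ≤ Real.exp 1 ^ P.natDegree * Real.exp (logMahler P) := by
        gcongr
        exact Real.add_one_le_exp 1 |>.trans' (by norm_num)
    _ = Real.exp (logMahler P + P.natDegree) := by
        rw [← Real.exp_nat_mul, ← Real.exp_add, mul_one, add_comm]

theorem one_le_abs_aeval_of_natDegree_eq_zero {P : ℤ[X]} (hP : P ≠ 0) (hd : P.natDegree = 0)
    (x : ℝ) : 1 ≤ |aeval x P| := by
  obtain ⟨a, rfl⟩ := natDegree_eq_zero.mp hd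
  have : 1 ≤ |a| := Int.one_le_abs (by simpa using hP)
  rw [aeval_C, algebraMap_int_eq, eq_intCast]
  exact_mod_cast this

theorem one_le_abs_aeval_of_irreducible_of_coeff_zero {P : ℤ[X]} (hP : Irreducible P)
    (hP0 : P.coeff 0 = 0) {x : ℝ} (hx : 1 ≤ |x|) : 1 ≤ |aeval x P| := by
  obtain ⟨u, rfl⟩ := (irreducible_X.dvd_irreducible_iff_associated hP).mp (X_dvd_iff.mpr hP0)
  rw [map_mul, abs_mul, aeval_X]
  exact one_le_mul_of_one_le_of_one_le hx
    (one_le_abs_aeval_of_natDegree_eq_zero u.ne_zero (natDegree_eq_zero_of_isUnit u.isUnit) x)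

theorem exp_le_abs_aeval_of_irreducible {P : ℤ[X]} (hP : Irreducible P) :
    Real.exp (-(65250 * P.natDegree ^ 2 * (logMahler P + P.natDegree))) ≤
      |aeval (Real.exp 1) P| := by
  have hm := logMahler_nonneg hP.ne_zero
  have exp_le_one :
      Real.exp (-(65250 * P.natDegree ^ 2 * (logMahler P + P.natDegree))) ≤ 1 := by
    rw [Real.exp_le_one_iff, neg_nonpos]
    positivity
  rcases Nat.eq_zero_or_pos P.natDegree with hd | hd
  · exact exp_le_one.trans (one_le_abs_aeval_of_natDegree_eq_zero hP.ne_zero hd _)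
  by_cases hP0 : P.coeff 0 = 0
  · refine exp_le_one.trans (one_le_abs_aeval_of_irreducible_of_coeff_zero hP hP0 ?_)
    rw [Real.abs_exp]
    exact Real.one_le_exp zero_le_one
  · exact exp_le_abs_aeval_of_irreducible_of_polyLength_le hP hP0 rfl hd (by linarith)
      (polyLength_le_exp hP.ne_zero)

theorem sq_mul_add_add_sq_mul_add_le {m n x y : ℝ} (hm : 0 ≤ m) (hn : 0 ≤ n) (hx : 0 ≤ x)
    (hy : 0 ≤ y) : x ^ 2 * (m + x) + y ^ 2 * (n + y) ≤ (x + y) ^ 2 * (m + n + (x + y)) :=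
  calc x ^ 2 * (m + x) + y ^ 2 * (n + y)
      ≤ x ^ 2 * (m + n + (x + y)) + y ^ 2 * (m + n + (x + y)) := by gcongr <;> linarith
    _ = (x ^ 2 + y ^ 2) * (m + n + (x + y)) := by ring
    _ ≤ (x + y) ^ 2 * (m + n + (x + y)) := by
      gcongr
      nlinarith

theorem exp_le_abs_aeval {P : ℤ[X]} (hP : P ≠ 0) :
    Real.exp (-(65250 * P.natDegree ^ 2 * (logMahler P + P.natDegree))) ≤
      |aeval (Real.exp 1) P| := by
  induction P using WfDvdMonoid.induction_on_irreducible with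
  | zero => exact absurd rfl hP
  | unit u hu =>
    have hd := natDegree_eq_zero_of_isUnit hu
    simpa [hd] using one_le_abs_aeval_of_natDegree_eq_zero hP hd (Real.exp 1)
  | mul a i ha hi ih =>
    rw [map_mul, abs_mul, natDegree_mul hi.ne_zero ha, logMahler_mul hi.ne_zero ha]
    refine (mul_le_mul (exp_le_abs_aeval_of_irreducible hi) (ih ha) (Real.exp_nonneg _)
      (abs_nonneg _)).trans' ?_
    rw [← Real.exp_add, Real.exp_le_exp]
    have := sq_mul_add_add_sq_mul_add_le (logMahler_nonneg hi.ne_zero) (logMahler_nonneg ha)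
      i.natDegree.cast_nonneg a.natDegree.cast_nonneg
    push_cast
    linarith

/-- **Theorem 4, part 2.** For a nonzero `P ∈ ℤ[x]` with `deg P ≤ d`, `L(P) ≤ L`, `L ≥ 3`:
`|P(e)| ≥ exp(−1.3·10⁵ d² (log L + d))`. -/
theorem e_transcendence_measure (P : Polynomial ℤ) (hP : P ≠ 0)
    (d : ℕ) (hd : P.natDegree ≤ d)
    (L : ℝ) (hL : polyLength P ≤ L) (hL3 : 3 ≤ L) :
    Real.exp (-(130000 * d ^ 2 * (Real.log L + d))) ≤
      |Polynomial.aeval (Real.exp 1) P| := by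
  have hm := logMahler_nonneg hP
  have hmL : logMahler P ≤ Real.log L := by
    rw [Real.le_log_iff_exp_le (by linarith)]
    exact (exp_logMahler_le_polyLength hP).trans hL
  refine (exp_le_abs_aeval hP).trans' (Real.exp_le_exp.mpr (neg_le_neg ?_))
  gcongr
  norm_num
end

section
/- Let N ≥ 1, H ≥ 1, σ ≥ 0 and x be integers, and set d_σ = ν(H)^σ where ν(H) is the least common multiple of 1, 2, …, H. Then for every integer u with 0 ≤ u ≤ σ, the number d_σ · Δ^{(u)}(x, N, H) is an integer. -/
/-!
Write `b_k = z(z+1)⋯(z+k-1)/k!`. The Chu-Vandermonde identity `b_k(r + z) = ∑ b_i(r) b_{k-i}(z)`,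
compared in degree one in `z`, gives `b_k' = ∑_{i<k} b_i / (k-i)`. For `k ≤ H` every denominator
`k-i` divides `d = ν(H)`, so the derivation `d • d/dz` preserves the subring `ℤ[b_0, …, b_H]`: it
suffices to check this on the generators. Since `Δ(z, N, H)` is a product of generators,
`d^u Δ^{(u)}(z, N, H)` lies in this subring, whose elements take integer values at integers.
-/

open Polynomial

/-- The rising factorial polynomial `z (z+1) ⋯ (z+k−1)`. -/
noncomputable def risingPoly (k : ℕ) : Polynomial ℚ :=
  ∏ j ∈ Finset.range k, (Polynomial.X + Polynomial.C (j : ℚ))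

/-- The binomial polynomial
`Δ(z, N, H) = (z(z+1)⋯(z+H−1)/H!)^q · z(z+1)⋯(z+r−1)/r!`, where `N = qH + r` with
`1 ≤ r ≤ H` (and `Δ(z, 0, H) = 1`). -/
noncomputable def binomPoly (N H : ℕ) : Polynomial ℚ :=
  if N = 0 then 1 else
    (Polynomial.C ((H.factorial : ℚ)⁻¹) * risingPoly H) ^ ((N - 1) / H) *
      (Polynomial.C (((N - ((N - 1) / H) * H).factorial : ℚ)⁻¹) *
        risingPoly (N - ((N - 1) / H) * H))

/-- `ν(H)`: the least common multiple of `1, 2, …, H`. -/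
def nuLcm (H : ℕ) : ℕ := (Finset.Icc 1 H).lcm id

open Finset.HasAntidiagonal (antidiagonal mem_antidiagonal)

section ChuVandermonde

variable {R : Type*} [Ring R] [BinomialRing R]

lemma multichoose_eq_negOnePow_smul_choose_neg (r : R) (n : ℕ) :
    Ring.multichoose r n = Int.negOnePow n • Ring.choose (-r) n := by
  rw [Ring.choose_neg', smul_smul, Int.units_mul_self, one_smul]

lemma add_multichoose_eq {r s : R} (k : ℕ) (h : Commute r s) :
    Ring.multichoose (r + s) k =
      ∑ ij ∈ antidiagonal k, Ring.multichoose r ij.1 * Ring.multichoose s ij.2 := by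
  rw [multichoose_eq_negOnePow_smul_choose_neg, neg_add,
    Ring.add_choose_eq k h.neg_left.neg_right, Finset.smul_sum]
  refine Finset.sum_congr rfl fun ij hij => ?_
  rw [← mem_antidiagonal.mp hij, Nat.cast_add, Int.negOnePow_add,
    multichoose_eq_negOnePow_smul_choose_neg r, multichoose_eq_negOnePow_smul_choose_neg s,
    smul_mul_smul_comm]

end ChuVandermonde

section MultichooseX

section CommRing

variable {R : Type*} [CommRing R] [BinomialRing R] [BinomialRing R[X]]

lemma eval_multichoose_X (r : R) (k : ℕ) :
    (Ring.multichoose (X : R[X]) k).eval r = Ring.multichoose r k := by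
  rw [← coe_evalRingHom, Ring.map_multichoose, coe_evalRingHom, eval_X]

lemma taylor_multichoose_X (r : R) (k : ℕ) :
    taylor r (Ring.multichoose X k) =
      ∑ ij ∈ antidiagonal k, C (Ring.multichoose r ij.1) * Ring.multichoose X ij.2 := by
  rw [← taylorAlgHom_apply, Ring.map_multichoose, taylorAlgHom_apply, taylor_X, add_comm,
    add_multichoose_eq k (commute_X (C r)).symm]
  simp only [Ring.map_multichoose]

end CommRing

variable {K : Type*} [Field K] [CharZero K]

lemma multichoose_X_eq_inv_factorial_smul_ascPochhammer (k : ℕ) :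
    Ring.multichoose (X : K[X]) k = (k.factorial : K)⁻¹ • ascPochhammer K k := by
  have hfact : (k.factorial : K) ≠ 0 := Nat.cast_ne_zero.mpr k.factorial_ne_zero
  have heval : (ascPochhammer ℕ k).smeval (X : K[X]) = ascPochhammer K k := by
    rw [ascPochhammer_smeval_eq_eval, ← ascPochhammer_map C, eval_map, eval₂_C_X]
  rw [eq_inv_smul_iff₀ hfact, Nat.cast_smul_eq_nsmul,
    Ring.factorial_nsmul_multichoose_eq_ascPochhammer, heval]

lemma coeff_one_multichoose_X_succ (k : ℕ) :
    (Ring.multichoose (X : K[X]) (k + 1)).coeff 1 = ((k : K) + 1)⁻¹ := by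
  have hfact : (k.factorial : K) ≠ 0 := Nat.cast_ne_zero.mpr k.factorial_ne_zero
  have hcoeff : (ascPochhammer K (k + 1)).coeff 1 = k.factorial := by
    rw [ascPochhammer_succ_left, coeff_X_mul, coeff_zero_eq_eval_zero, eval_comp]
    simp
  rw [multichoose_X_eq_inv_factorial_smul_ascPochhammer, coeff_smul, smul_eq_mul, hcoeff,
    Nat.factorial_succ, Nat.cast_mul, mul_inv, inv_mul_cancel_right₀ hfact, Nat.cast_succ]

lemma derivative_multichoose_X_succ (k : ℕ) :
    derivative (Ring.multichoose (X : K[X]) (k + 1)) =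
      ∑ ij ∈ antidiagonal k, ((ij.2 : K) + 1)⁻¹ • Ring.multichoose X ij.1 := by
  refine Polynomial.funext fun r => ?_
  rw [← taylor_coeff_one, taylor_multichoose_X, finsetSum_coeff,
    Finset.Nat.sum_antidiagonal_succ', eval_finsetSum]
  simp only [coeff_C_mul, Ring.multichoose_zero_right, coeff_one, one_ne_zero, if_false, zero_mul,
    zero_add, coeff_one_multichoose_X_succ, eval_smul, smul_eq_mul, eval_multichoose_X,
    mul_comm (Ring.multichoose r _)]

end MultichooseX

lemma mapsTo_derivation_adjoin {R A : Type*} [CommSemiring R] [CommSemiring A] [Algebra R A]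
    (D : Derivation R A A) {s : Set A} (hs : Set.MapsTo D s (Algebra.adjoin R s)) :
    Set.MapsTo D (Algebra.adjoin R s) (Algebra.adjoin R s) := by
  intro a ha
  rw [SetLike.mem_coe] at ha ⊢
  induction ha using Algebra.adjoin_induction with
  | mem a ha => exact hs ha
  | algebraMap r => simp
  | add a b _ _ iha ihb => simpa only [map_add] using add_mem iha ihb
  | mul a b ha hb iha ihb =>
    simpa only [D.leibniz, smul_eq_mul] using add_mem (mul_mem ha ihb) (mul_mem hb iha)

/-- The subring `ℤ[b_0, …, b_H]` of `K[X]`, where `b_k = X(X+1)⋯(X+k-1)/k!`; the polynomial `b_k` is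
encoded as `Ring.multichoose X k`. -/
noncomputable def multichooseSubalgebra (K : Type*) [Field K] [CharZero K] (H : ℕ) :
    Subalgebra ℤ K[X] :=
  Algebra.adjoin ℤ (Ring.multichoose X '' Set.Iic H)

namespace multichooseSubalgebra

variable {K : Type*} [Field K] [CharZero K] {H : ℕ}

lemma multichoose_X_mem {k : ℕ} (hk : k ≤ H) :
    Ring.multichoose X k ∈ multichooseSubalgebra K H :=
  Algebra.subset_adjoin ⟨k, hk, rfl⟩

lemma smul_derivative_multichoose_X_mem {d k : ℕ} (hd : ∀ j ∈ Finset.Icc 1 H, j ∣ d)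
    (hk : k ≤ H) : d • derivative (Ring.multichoose X k) ∈ multichooseSubalgebra K H := by
  obtain _ | k := k
  · simp
  rw [derivative_multichoose_X_succ, Finset.smul_sum]
  refine sum_mem fun ij hij => ?_
  have hsum : ij.1 + ij.2 = k := mem_antidiagonal.mp hij
  obtain ⟨c, rfl⟩ := hd (ij.2 + 1) (Finset.mem_Icc.mpr (by omega))
  have hcancel : ((ij.2 + 1) * c) • (((ij.2 : K) + 1)⁻¹ • Ring.multichoose X ij.1) =
      c • Ring.multichoose (X : K[X]) ij.1 := by
    have hne : (ij.2 : K) + 1 ≠ 0 := Nat.cast_add_one_ne_zero ij.2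
    rw [← Nat.cast_smul_eq_nsmul K, smul_smul, Nat.cast_mul, Nat.cast_succ, mul_right_comm,
      mul_inv_cancel₀ hne, one_mul, Nat.cast_smul_eq_nsmul]
  rw [hcancel]
  exact nsmul_mem (multichoose_X_mem (by omega)) c

lemma smul_derivative_mem {d : ℕ} (hd : ∀ j ∈ Finset.Icc 1 H, j ∣ d) {p : K[X]}
    (hp : p ∈ multichooseSubalgebra K H) : d • derivative p ∈ multichooseSubalgebra K H := by
  refine mapsTo_derivation_adjoin (d • (derivative' (R := K)).restrictScalars ℤ) ?_ hp
  rintro _ ⟨k, hk, rfl⟩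
  exact smul_derivative_multichoose_X_mem hd hk

lemma pow_smul_iterate_derivative_mem {d : ℕ} (hd : ∀ j ∈ Finset.Icc 1 H, j ∣ d) {p : K[X]}
    (hp : p ∈ multichooseSubalgebra K H) (u : ℕ) :
    d ^ u • derivative^[u] p ∈ multichooseSubalgebra K H := by
  induction u with
  | zero => simpa using hp
  | succ u ih =>
    simpa only [Function.iterate_succ_apply', derivative_smul, smul_smul, ← pow_succ'] using
      smul_derivative_mem hd ih

lemma exists_eval_intCast_eq {p : K[X]} (hp : p ∈ multichooseSubalgebra K H) (x : ℤ) :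
    ∃ m : ℤ, p.eval (x : K) = m := by
  induction hp using Algebra.adjoin_induction with
  | mem p hp =>
    obtain ⟨k, -, rfl⟩ := hp
    refine ⟨Ring.multichoose x k, ?_⟩
    rw [eval_multichoose_X, ← eq_intCast (Int.castRingHom K) x, ← Ring.map_multichoose, eq_intCast]
  | algebraMap n => exact ⟨n, by simp⟩
  | add p q _ _ ihp ihq =>
    obtain ⟨m, hm⟩ := ihp
    obtain ⟨n, hn⟩ := ihq
    exact ⟨m + n, by rw [eval_add, hm, hn, Int.cast_add]⟩
  | mul p q _ _ ihp ihq =>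
    obtain ⟨m, hm⟩ := ihp
    obtain ⟨n, hn⟩ := ihq
    exact ⟨m * n, by rw [eval_mul, hm, hn, Int.cast_mul]⟩

end multichooseSubalgebra

lemma risingPoly_eq_ascPochhammer (k : ℕ) : risingPoly k = ascPochhammer ℚ k := by
  induction k with
  | zero => simp [risingPoly]
  | succ k ih =>
    rw [ascPochhammer_succ_right, ← ih, risingPoly, Finset.prod_range_succ, C_eq_natCast,
      risingPoly]

lemma C_inv_factorial_mul_risingPoly (k : ℕ) :
    C (k.factorial : ℚ)⁻¹ * risingPoly k = Ring.multichoose X k := by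
  rw [risingPoly_eq_ascPochhammer, multichoose_X_eq_inv_factorial_smul_ascPochhammer, smul_eq_C_mul]

lemma binomPoly_mem_multichooseSubalgebra (N : ℕ) {H : ℕ} (hH : 1 ≤ H) :
    binomPoly N H ∈ multichooseSubalgebra ℚ H := by
  have hr : N - (N - 1) / H * H ≤ H := by
    have := Nat.div_add_mod' (N - 1) H
    have := Nat.mod_lt (N - 1) hH
    omega
  rw [binomPoly]
  split_ifs
  · exact one_mem _
  · rw [C_inv_factorial_mul_risingPoly, C_inv_factorial_mul_risingPoly]
    exact mul_mem (pow_mem (multichooseSubalgebra.multichoose_X_mem le_rfl) _)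
      (multichooseSubalgebra.multichoose_X_mem hr)

/-- **Lemma 4, integrality.** For integers `N ≥ 1`, `H ≥ 1`, `σ ≥ 0`, `x`, and
`d_σ = ν(H)^σ`, the number `d_σ · Δ^{(u)}(x, N, H)` is an integer for `0 ≤ u ≤ σ`. -/
theorem binomPoly_deriv_integer (N H : ℕ) (hN : 1 ≤ N) (hH : 1 ≤ H)
    (σ : ℕ) (x : ℤ) (u : ℕ) (hu : u ≤ σ) :
    ∃ m : ℤ, ((nuLcm H : ℚ) ^ σ) *
      Polynomial.eval (x : ℚ) (Polynomial.derivative^[u] (binomPoly N H)) = (m : ℚ) := by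
  have hdvd : ∀ j ∈ Finset.Icc 1 H, j ∣ nuLcm H := fun j hj => Finset.dvd_lcm hj
  have hmem := multichooseSubalgebra.pow_smul_iterate_derivative_mem hdvd
    (binomPoly_mem_multichooseSubalgebra N hH) u
  obtain ⟨m, hm⟩ := multichooseSubalgebra.exists_eval_intCast_eq hmem x
  refine ⟨(nuLcm H : ℤ) ^ (σ - u) * m, ?_⟩
  rw [Int.cast_mul, ← hm, eval_smul, nsmul_eq_mul, ← pow_sub_mul_pow _ hu]
  push_cast
  ring
end

section
/- Let N ≥ 1, H ≥ 1, σ ≥ 0 and x be integers. Then Σ_{u=0}^{σ} C(σ, u) · |Δ^{(u)}(x, N, H)| < σ^σ · e^{N+H} · (1 + |x|/H)^N, where C(σ, u) is the binomial coefficient. -/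
open Polynomial

/-!
Write `P = Δ(·, N, H)` and `y = ‖x‖`. Since `P` has nonnegative coefficients,
`‖P^{(u)}(x)‖ ≤ P^{(u)}(y) ≤ u! P(y + 1)`: the number `P^{(u)}(y) / u!` is one of the nonnegative
terms of the Taylor expansion of `P(y + 1)` at `y`. The combinatorial factor is then
`∑ C(σ,u) u! = σ! ∑_{k ≤ σ} 1/k! < e σ! ≤ e σ^σ`.

For `k ≤ H` we have `(y+1)⋯(y+k)/k! ≤ (y+H)^k/k! = (H^k/k!) (1+y/H)^k ≤ e^H (1+y/H)^k`.
Multiplying over the `q` full blocks and the last block gives `P(y+1) ≤ e^{qH+H} (1+y/H)^N`, and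
`qH ≤ N - 1` leaves room for the factor `e` above.
-/

section NonnegCoeffs

variable {R : Type*} [CommSemiring R] [PartialOrder R] [IsOrderedRing R]

variable (R) in
/-- The polynomials with nonnegative coefficients. They form a subsemiring, so that membership of
products and powers is inherited from the factors. -/
def nonnegCoeffs : Subsemiring R[X] where
  carrier := {p | ∀ n, 0 ≤ p.coeff n}
  zero_mem' _ := by simp
  one_mem' n := by rw [coeff_one]; split_ifs <;> simp
  add_mem' hp hq n := by rw [coeff_add]; exact add_nonneg (hp n) (hq n)
  mul_mem' hp hq n := by
    rw [coeff_mul]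
    exact Finset.sum_nonneg fun i _ => mul_nonneg (hp i.1) (hq i.2)

namespace nonnegCoeffs

variable {p : R[X]}

lemma C_mem {a : R} (ha : 0 ≤ a) : C a ∈ nonnegCoeffs R := by
  intro n
  rw [coeff_C]
  split_ifs <;> simp [ha]

lemma X_mem : (X : R[X]) ∈ nonnegCoeffs R := by
  intro n
  rw [coeff_X]
  split_ifs <;> simp

lemma iterate_derivative_mem (hp : p ∈ nonnegCoeffs R) (u : ℕ) :
    derivative^[u] p ∈ nonnegCoeffs R := by
  intro n
  rw [coeff_iterate_derivative]
  exact nsmul_nonneg (hp _) _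

lemma map_mem {S : Type*} [CommSemiring S] [PartialOrder S] [IsOrderedRing S] {f : R →+* S}
    (hf : Monotone f) (hp : p ∈ nonnegCoeffs R) : p.map f ∈ nonnegCoeffs S := by
  intro n
  rw [coeff_map, ← map_zero f]
  exact hf (hp n)

lemma eval_nonneg (hp : p ∈ nonnegCoeffs R) {a : R} (ha : 0 ≤ a) : 0 ≤ p.eval a := by
  rw [eval_eq_sum_range]
  exact Finset.sum_nonneg fun i _ => mul_nonneg (hp i) (pow_nonneg ha i)

lemma coeff_le_eval_one (hp : p ∈ nonnegCoeffs R) (n : ℕ) : p.coeff n ≤ p.eval 1 := by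
  have hdeg : p.natDegree < p.natDegree + n + 1 := by lia
  simp only [eval_eq_sum_range' hdeg, one_pow, mul_one]
  exact Finset.single_le_sum (fun i _ => hp i) (Finset.mem_range.2 (by lia))

lemma taylor_mem (hp : p ∈ nonnegCoeffs R) {a : R} (ha : 0 ≤ a) :
    taylor a p ∈ nonnegCoeffs R := by
  intro n
  have hasseDeriv_mem : hasseDeriv n p ∈ nonnegCoeffs R := fun m => by
    rw [hasseDeriv_coeff]
    exact mul_nonneg (Nat.cast_nonneg _) (hp _)
  rw [taylor_coeff]
  exact eval_nonneg hasseDeriv_mem ha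

lemma eval_iterate_derivative_le (hp : p ∈ nonnegCoeffs R) {a : R} (ha : 0 ≤ a) (u : ℕ) :
    (derivative^[u] p).eval a ≤ u.factorial * p.eval (a + 1) :=
  calc (derivative^[u] p).eval a
      = u.factorial * (taylor a p).coeff u := by
        rw [← factorial_smul_hasseDeriv, taylor_coeff]
        simp
    _ ≤ u.factorial * (taylor a p).eval 1 := by
        gcongr
        exact coeff_le_eval_one (taylor_mem hp ha) u
    _ = u.factorial * p.eval (a + 1) := by rw [taylor_eval, add_comm]

section Norm

variable {A : Type*} [SeminormedRing A] [NormOneClass A] [NormedAlgebra ℚ A] {p : ℚ[X]}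

lemma norm_aeval_le (hp : p ∈ nonnegCoeffs ℚ) (x : A) : ‖aeval x p‖ ≤ aeval ‖x‖ p := by
  rw [aeval_eq_sum_range, aeval_eq_sum_range]
  refine norm_sum_le_of_le _ fun i _ => ?_
  calc ‖p.coeff i • x ^ i‖
      ≤ ‖p.coeff i‖ * ‖x‖ ^ i := (norm_smul_le _ _).trans (by gcongr; exact norm_pow_le x i)
    _ = p.coeff i • ‖x‖ ^ i := by
        rw [← Rat.norm_cast_real, Real.norm_of_nonneg (by exact_mod_cast hp i), Rat.smul_def]

lemma aeval_real_nonneg (hp : p ∈ nonnegCoeffs ℚ) {y : ℝ} (hy : 0 ≤ y) : 0 ≤ aeval y p := by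
  rw [← eval_map_algebraMap]
  exact eval_nonneg (map_mem Rat.cast_mono hp) hy

lemma norm_aeval_iterate_derivative_le (hp : p ∈ nonnegCoeffs ℚ) (x : A) (u : ℕ) :
    ‖aeval x (derivative^[u] p)‖ ≤ u.factorial * aeval (‖x‖ + 1) p := by
  refine (norm_aeval_le (iterate_derivative_mem hp u) x).trans ?_
  rw [← eval_map_algebraMap, ← eval_map_algebraMap, ← iterate_derivative_map]
  exact eval_iterate_derivative_le (map_mem Rat.cast_mono hp) (norm_nonneg x) u

end Norm

end nonnegCoeffs

end NonnegCoeffs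

lemma sum_choose_mul_factorial_eq (n : ℕ) :
    ∑ u ∈ Finset.range (n + 1), (n.choose u : ℝ) * u.factorial =
      n.factorial * ∑ k ∈ Finset.range (n + 1), (1 : ℝ) / k.factorial := by
  rw [← Finset.sum_range_reflect (fun k : ℕ => (1 : ℝ) / k.factorial), Finset.mul_sum]
  refine Finset.sum_congr rfl fun u hu => ?_
  have hun : u ≤ n := Finset.mem_range_succ_iff.1 hu
  rw [Nat.add_sub_cancel, ← Nat.choose_mul_factorial_mul_factorial hun]
  push_cast
  field_simp

lemma sum_one_div_factorial_lt_exp_one (n : ℕ) :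
    ∑ k ∈ Finset.range n, (1 : ℝ) / k.factorial < Real.exp 1 :=
  calc ∑ k ∈ Finset.range n, (1 : ℝ) / k.factorial
      < ∑ k ∈ Finset.range (n + 1), (1 : ℝ) / k.factorial := by
        rw [Finset.sum_range_succ]
        exact lt_add_of_pos_right _ (by positivity)
    _ ≤ Real.exp 1 := by simpa using Real.sum_le_exp_of_nonneg zero_le_one (n + 1)

lemma sum_choose_mul_factorial_lt (n : ℕ) :
    ∑ u ∈ Finset.range (n + 1), (n.choose u : ℝ) * u.factorial < n.factorial * Real.exp 1 := by
  rw [sum_choose_mul_factorial_eq]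
  gcongr
  exact sum_one_div_factorial_lt_exp_one _

/-- The polynomial `z (z+1) ⋯ (z+k−1) / k!`, whose value at `z = n` is `Nat.multichoose n k`.
The polynomial `Δ(z, N, H)` is a product of such factors. -/
noncomputable def multichoosePoly (k : ℕ) : ℚ[X] :=
  C (k.factorial : ℚ)⁻¹ * risingPoly k

lemma risingPoly_mem_nonnegCoeffs (k : ℕ) : risingPoly k ∈ nonnegCoeffs ℚ :=
  prod_mem fun j _ => add_mem nonnegCoeffs.X_mem (nonnegCoeffs.C_mem j.cast_nonneg)

lemma multichoosePoly_mem_nonnegCoeffs (k : ℕ) : multichoosePoly k ∈ nonnegCoeffs ℚ :=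
  mul_mem (nonnegCoeffs.C_mem (by positivity)) (risingPoly_mem_nonnegCoeffs k)

lemma binomPoly_zero (H : ℕ) : binomPoly 0 H = 1 :=
  if_pos rfl

lemma binomPoly_mul_add (q : ℕ) {r H : ℕ} (hr : 1 ≤ r) (hrH : r ≤ H) :
    binomPoly (q * H + r) H = multichoosePoly H ^ q * multichoosePoly r := by
  have hdiv : (q * H + r - 1) / H = q :=
    Nat.div_eq_of_lt_le (by lia) (by rw [add_one_mul]; lia)
  rw [binomPoly, if_neg (by lia), hdiv, Nat.add_sub_cancel_left]
  rfl

lemma exists_eq_mul_add_of_pos {N H : ℕ} (hN : 1 ≤ N) (hH : 1 ≤ H) :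
    ∃ q r, 1 ≤ r ∧ r ≤ H ∧ N = q * H + r :=
  ⟨(N - 1) / H, (N - 1) % H + 1, by lia, Nat.mod_lt _ hH, by
    have := Nat.div_add_mod' (N - 1) H
    lia⟩

lemma binomPoly_mem_nonnegCoeffs (N H : ℕ) : binomPoly N H ∈ nonnegCoeffs ℚ := by
  rw [binomPoly]
  split_ifs
  · exact one_mem _
  · exact mul_mem (pow_mem (multichoosePoly_mem_nonnegCoeffs _) _)
      (multichoosePoly_mem_nonnegCoeffs _)

lemma aeval_risingPoly_add_one_le {k : ℕ} {t y : ℝ} (hkt : k ≤ t) (hy : 0 ≤ y) :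
    aeval (y + 1) (risingPoly k) ≤ (y + t) ^ k := by
  simp only [risingPoly, map_prod, map_add, aeval_X, map_natCast]
  calc ∏ j ∈ Finset.range k, (y + 1 + j)
      ≤ ∏ _j ∈ Finset.range k, (y + t) := by
        refine Finset.prod_le_prod (fun j _ => by positivity) fun j hj => ?_
        have hjk : (j : ℝ) + 1 ≤ k := by exact_mod_cast Finset.mem_range.1 hj
        linarith
    _ = (y + t) ^ k := by rw [Finset.prod_const, Finset.card_range]

lemma aeval_multichoosePoly_add_one_le {k : ℕ} {t y : ℝ} (ht : 0 < t) (hkt : k ≤ t)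
    (hy : 0 ≤ y) :
    aeval (y + 1) (multichoosePoly k) ≤ Real.exp t * (1 + y / t) ^ k :=
  calc aeval (y + 1) (multichoosePoly k)
      = (k.factorial : ℝ)⁻¹ * aeval (y + 1) (risingPoly k) := by simp [multichoosePoly]
    _ ≤ (k.factorial : ℝ)⁻¹ * (y + t) ^ k := by
        gcongr
        exact aeval_risingPoly_add_one_le hkt hy
    _ = t ^ k / k.factorial * (1 + y / t) ^ k := by
        have hyt : y + t = t * (1 + y / t) := by field_simp; ring
        rw [hyt, mul_pow]
        ring
    _ ≤ Real.exp t * (1 + y / t) ^ k := by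
        gcongr
        exact Real.pow_div_factorial_le_exp t ht.le k

lemma aeval_binomPoly_add_one_le (N : ℕ) {H : ℕ} (hH : 1 ≤ H) {y : ℝ} (hy : 0 ≤ y) :
    aeval (y + 1) (binomPoly N H) ≤ Real.exp (N + H - 1) * (1 + y / H) ^ N := by
  rcases Nat.eq_zero_or_pos N with rfl | hN
  · simpa [binomPoly_zero] using hH
  obtain ⟨q, r, hr, hrH, rfl⟩ := exists_eq_mul_add_of_pos hN hH
  have hr' : (1 : ℝ) ≤ r := by exact_mod_cast hr
  have nonneg (k : ℕ) : 0 ≤ aeval (y + 1) (multichoosePoly k) :=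
    nonnegCoeffs.aeval_real_nonneg (multichoosePoly_mem_nonnegCoeffs k) (by positivity)
  have block_le {k : ℕ} (hk : k ≤ H) :
      aeval (y + 1) (multichoosePoly k) ≤ Real.exp H * (1 + y / H) ^ k :=
    aeval_multichoosePoly_add_one_le (by positivity) (by exact_mod_cast hk) hy
  calc aeval (y + 1) (binomPoly (q * H + r) H)
      = aeval (y + 1) (multichoosePoly H) ^ q * aeval (y + 1) (multichoosePoly r) := by
        rw [binomPoly_mul_add q hr hrH, map_mul, map_pow]
    _ ≤ (Real.exp H * (1 + y / H) ^ H) ^ q * (Real.exp H * (1 + y / H) ^ r) := by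
        gcongr
        exacts [nonneg r, nonneg H, block_le le_rfl, block_le hrH]
    _ = Real.exp (q * H + H) * (1 + y / H) ^ (q * H + r) := by
        rw [Real.exp_add, Real.exp_nat_mul]
        ring
    _ ≤ Real.exp (↑(q * H + r) + H - 1) * (1 + y / H) ^ (q * H + r) := by
        gcongr
        push_cast
        linarith

theorem binomPoly_deriv_sum_bound_general {A : Type*} [SeminormedRing A] [NormOneClass A]
    [NormedAlgebra ℚ A] (N : ℕ) {H : ℕ} (hH : 1 ≤ H) (σ : ℕ) (x : A) :
    ∑ u ∈ Finset.range (σ + 1), (σ.choose u : ℝ) * ‖aeval x (derivative^[u] (binomPoly N H))‖ <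
      (σ : ℝ) ^ σ * Real.exp (N + H) * (1 + ‖x‖ / H) ^ N :=
  calc ∑ u ∈ Finset.range (σ + 1), (σ.choose u : ℝ) * ‖aeval x (derivative^[u] (binomPoly N H))‖
      ≤ ∑ u ∈ Finset.range (σ + 1),
          (σ.choose u : ℝ) * (u.factorial * aeval (‖x‖ + 1) (binomPoly N H)) := by
        gcongr with u
        exact nonnegCoeffs.norm_aeval_iterate_derivative_le (binomPoly_mem_nonnegCoeffs N H) x u
    _ = (∑ u ∈ Finset.range (σ + 1), (σ.choose u : ℝ) * u.factorial) *
          aeval (‖x‖ + 1) (binomPoly N H) := by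
        simp only [Finset.sum_mul, mul_assoc]
    _ ≤ (∑ u ∈ Finset.range (σ + 1), (σ.choose u : ℝ) * u.factorial) *
          (Real.exp (N + H - 1) * (1 + ‖x‖ / H) ^ N) := by
        gcongr
        exact aeval_binomPoly_add_one_le N hH (norm_nonneg x)
    _ < (σ.factorial * Real.exp 1) * (Real.exp (N + H - 1) * (1 + ‖x‖ / H) ^ N) := by
        gcongr
        exact sum_choose_mul_factorial_lt σ
    _ = σ.factorial * Real.exp (N + H) * (1 + ‖x‖ / H) ^ N := by
        rw [← add_sub_cancel 1 ((N : ℝ) + H), Real.exp_add]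
        ring_nf
    _ ≤ (σ : ℝ) ^ σ * Real.exp (N + H) * (1 + ‖x‖ / H) ^ N := by
        gcongr
        exact_mod_cast Nat.factorial_le_pow σ

/-- **Lemma 4, estimate (4.3).** For integers `N ≥ 1`, `H ≥ 1`, `σ ≥ 0` and `x`:
`∑_{u=0}^{σ} C(σ,u) |Δ^{(u)}(x, N, H)| < σ^σ e^{N+H} (1 + |x|/H)^N`. -/
theorem binomPoly_deriv_sum_bound (N H : ℕ) (hN : 1 ≤ N) (hH : 1 ≤ H)
    (σ : ℕ) (x : ℤ) :
    ∑ u ∈ Finset.range (σ + 1), (σ.choose u : ℝ) *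
        |(Polynomial.eval (x : ℚ) (Polynomial.derivative^[u] (binomPoly N H)) : ℚ)| <
      (σ : ℝ) ^ σ * Real.exp (N + H) * (1 + |(x : ℝ)| / H) ^ N := by
  simpa [← Rat.norm_cast_real] using binomPoly_deriv_sum_bound_general N hH σ (x : ℚ)
end
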